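/- There exists an absolute constant C > 0 such that for every prime power q, every n, every admissible tuple (a,b,c), and every finite set A' ⊆ F_q^n, there exists a subset I ⊆ A' that is a cap set for (a,b,c) and satisfies |I| ≥ C · ∑_{x∈A'} (d_x + 1)^{−1/3}, where d_x denotes the number of pairs (y,z) ∈ (A')^2 with ax+by+cz = 0. -/

import Mathlib

/-!
The equation `a x + b y + c z = 0` reads `x = y + t (z - y)` with `t = -c / a ≠ 0, 1`.

Let `S` be a subset of density `η` of a finite vector space `W`, such that only a proportion
`β < η ^ 3` of the pairs in `S × W` come from solutions in `S`. Pulling `A` back along a random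
affine map to a suitable tensor power of `W`, and removing one point from each surviving
nontrivial solution, gives caps in `A` of size `≫ |A| d ^ (-e)`, where `d` is the average degree
and `e = log η / log β < 1 / 3`. The gain over the exponent `1 / 3` pays for the sum over the
dyadic ranges of degrees, and the constant depends on `η` and `β` only.

Over one finite field `F`, the graph of an anisotropic binary quadratic form is a cap of size
`|F| ^ 2` in `F ^ 3`; tuples with all coordinates but one in this cap give such an `S`, hence caps
in `F ^ m` of size greater than `|F| ^ (2 m / 3)`. These pass to extensions, hence from the
residue fields to every finite module over a ring.

For a constant independent of `F`, let `χ` be a nonzero additive character and `s = N t` an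
integer multiple of `t`. On a Bohr set, the phases of `χ (s ^ i u)` round to sequences modulo `M`
obeying a fixed linear recurrence, with `s` acting as the shift; Parseval's identity bounds the
fibres of the rounding. A cap in a power of the finite module of such sequences therefore pulls
back to a set `S` as above with `η` and `β` independent of `F`. For each prime ideal `I` of `ℤ[X]`
a suitable recurrence works for all `t` annihilated by `I` and not by one further polynomial, and
Noetherian induction on `I` covers all `t`.
-/

universe u v

section

open Finset Polynomial

/-- Cap sets for the equation `p (x - y) = q (z - y)`. The cap sets for `(a, b, c)` with
`a + b + c = 0` are the case `p = 1`, `q = -c / a`; a second coefficient is kept because the finite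
models of a field element `t` may only contain an integer multiple `N t` of it, and then the
equation reads `N (x - y) = (N t) (z - y)`. -/
def IsCap {R M : Type*} [Ring R] [AddCommGroup M] [Module R M] (p q : R) (C : Finset M) : Prop :=
  ∀ x ∈ C, ∀ y ∈ C, ∀ z ∈ C, p • (x - y) = q • (z - y) → x = y ∧ z = y

section Solutions

variable {R M : Type*} [Ring R] [AddCommGroup M] [Module R M]

open scoped Classical in
/-- The solutions `(x, y, z) ∈ S³` of `x = y + t (z - y)`, trivial ones included, each encoded by
the pair `(y, z)`. -/
noncomputable def solutions (t : R) (S : Finset M) : Finset (M × M) :=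
  {p ∈ S ×ˢ S | p.1 + t • (p.2 - p.1) ∈ S}

open scoped Classical in
/-- The solutions `(x, y, z) ∈ S³` of `x = y + t (z - y)` with `z ≠ y`, encoded by `(y, z)`. -/
noncomputable def nontrivialSolutions (t : R) (S : Finset M) : Finset (M × M) :=
  {p ∈ solutions t S | p.2 ≠ p.1}

open scoped Classical in
/-- The solutions in `S` of `x = y + t (z - y)` with `x` prescribed; their number is the degree
`d_x` of the Caro–Wei bound. -/
noncomputable def solutionsAt (t : R) (S : Finset M) (x : M) : Finset (M × M) :=
  {p ∈ S ×ˢ S | x = p.1 + t • (p.2 - p.1)}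

lemma mem_solutions {t : R} {S : Finset M} {p : M × M} :
    p ∈ solutions t S ↔ p.1 ∈ S ∧ p.2 ∈ S ∧ p.1 + t • (p.2 - p.1) ∈ S := by
  simp [solutions, and_assoc]

lemma mem_nontrivialSolutions {t : R} {S : Finset M} {p : M × M} :
    p ∈ nontrivialSolutions t S ↔ p ∈ solutions t S ∧ p.2 ≠ p.1 := by
  simp [nontrivialSolutions]

lemma mem_solutionsAt {t : R} {S : Finset M} {x : M} {p : M × M} :
    p ∈ solutionsAt t S x ↔ p.1 ∈ S ∧ p.2 ∈ S ∧ x = p.1 + t • (p.2 - p.1) := by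
  simp [solutionsAt, and_assoc]

lemma card_nontrivialSolutions_le_sum_solutionsAt (t : R) {A D : Finset M} (hDA : D ⊆ A) :
    #(nontrivialSolutions t D) ≤ ∑ x ∈ D, #(solutionsAt t A x) := by
  classical
  have third_mem : ∀ p ∈ nontrivialSolutions t D, p.1 + t • (p.2 - p.1) ∈ D := fun p hp ↦
    (mem_solutions.1 (mem_nontrivialSolutions.1 hp).1).2.2
  rw [card_eq_sum_card_fiberwise third_mem]
  gcongr with x hx
  intro p hp
  obtain ⟨hpD, rfl⟩ := mem_filter.1 hp
  obtain ⟨h₁, h₂, -⟩ := mem_solutions.1 (mem_nontrivialSolutions.1 hpD).1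
  exact mem_solutionsAt.2 ⟨hDA h₁, hDA h₂, rfl⟩

lemma exists_isCap_card_le_add_nontrivialSolutions (t : R) (S : Finset M) :
    ∃ I ⊆ S, IsCap 1 t I ∧ #S ≤ #I + #(nontrivialSolutions t S) := by
  classical
  refine ⟨S \ (nontrivialSolutions t S).image Prod.fst, sdiff_subset, ?_, ?_⟩
  · intro x hx y hy z hz h
    have hxyz : x = y + t • (z - y) := by rw [← h]; simp
    have hzy : z = y := by
      by_contra hne
      refine (mem_sdiff.1 hy).2 (mem_image.2 ⟨(y, z), mem_nontrivialSolutions.2 ⟨?_, hne⟩, rfl⟩)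
      exact mem_solutions.2 ⟨(mem_sdiff.1 hy).1, (mem_sdiff.1 hz).1, hxyz ▸ (mem_sdiff.1 hx).1⟩
    exact ⟨by simpa [hzy] using hxyz, hzy⟩
  · calc #S ≤ #(S \ (nontrivialSolutions t S).image Prod.fst)
          + #((nontrivialSolutions t S).image Prod.fst) := card_le_card_sdiff_add_card
      _ ≤ _ := by gcongr; exact card_image_le

lemma card_solutions_piFinset_le {ι : Type*} [Fintype ι] [DecidableEq ι] (t : R) (S : Finset M) :
    #(solutions t (Fintype.piFinset fun _ : ι ↦ S)) ≤ #(solutions t S) ^ Fintype.card ι := by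
  have card_pow : #(solutions t S) ^ Fintype.card ι
      = #(Fintype.piFinset fun _ : ι ↦ solutions t S) := by simp
  rw [card_pow]
  refine card_le_card_of_injOn (fun p i ↦ (p.1 i, p.2 i)) (fun p hp ↦ ?_) fun p _ q _ h ↦ ?_
  · obtain ⟨h₁, h₂, h₃⟩ := mem_solutions.1 hp
    rw [Fintype.mem_piFinset] at h₁ h₂ h₃
    exact Fintype.mem_piFinset.2 fun i ↦ mem_solutions.2 ⟨h₁ i, h₂ i, h₃ i⟩
  · exact Prod.ext (funext fun i ↦ congrArg Prod.fst (congrFun h i))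
      (funext fun i ↦ congrArg Prod.snd (congrFun h i))

end Solutions

section AddGroups

lemma card_fiber_mul_card {A B : Type*} [AddGroup A] [Fintype A] [AddGroup B] [Fintype B]
    [DecidableEq B] {f : A →+ B} (hf : Function.Surjective f) (b : B) :
    #{a | f a = b} * Fintype.card B = Fintype.card A := by
  have card_eq : Fintype.card A = ∑ b', #{a | f a = b'} :=
    card_eq_sum_card_fiberwise (f := f) (t := univ) (by simp)
  rw [card_eq, sum_congr rfl fun b' _ ↦ AddMonoidHom.card_fiber_eq_of_mem_range f (hf b') (hf b)]
  simp [mul_comm]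

open scoped Classical in
lemma sum_card_filter_add_mem {α G : Type*} [AddGroup G] [Fintype G] (B : Finset α) (f : α → G)
    (S : Finset G) : ∑ g, #{x ∈ B | f x + g ∈ S} = #B * #S := by
  have translates (a : G) : ∑ g, (if a + g ∈ S then 1 else 0) = #S :=
    (Fintype.sum_equiv (Equiv.addLeft a) _ (fun g ↦ if g ∈ S then 1 else 0) fun _ ↦ rfl).trans
      (by simp)
  simp_rw [card_filter]
  rw [sum_comm]
  simp_rw [translates, sum_const, smul_eq_mul]

open scoped Classical in
lemma exists_card_mul_card_le_filter_add_mem {α G : Type*} [AddGroup G] [Fintype G] (B : Finset α)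
    (f : α → G) (S : Finset G) : ∃ g, #B * #S ≤ #{x ∈ B | f x + g ∈ S} * Fintype.card G := by
  by_contra! h
  have := sum_lt_sum_of_nonempty univ_nonempty fun g (_ : g ∈ univ) ↦ h g
  rw [← sum_mul, sum_card_filter_add_mem, sum_const, card_univ, smul_eq_mul, mul_comm] at this
  exact this.false

end AddGroups

section AffinePreimages

variable {F V W : Type*} [Field F] [AddCommGroup V] [Module F V] [AddCommGroup W] [Module F W]

lemma card_linearMap_apply_eq [Fintype W] [Fintype (V →ₗ[F] W)] [DecidableEq W] {v : V}
    (hv : v ≠ 0) (w : W) :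
    #{L : V →ₗ[F] W | L v = w} * Fintype.card W = Fintype.card (V →ₗ[F] W) := by
  have surjective : Function.Surjective (LinearMap.applyₗ (R := F) (M₂ := W) v) := fun w ↦ by
    obtain ⟨φ, hφ⟩ := Module.Projective.exists_dual_eq_one F hv
    exact ⟨φ.smulRight w, by simp [hφ]⟩
  exact card_fiber_mul_card (f := (LinearMap.applyₗ (R := F) (M₂ := W) v).toAddMonoidHom)
    surjective w

open scoped Classical in
/-- A finite nonempty set of linear maps `V → W` is pairwise equidistributed on `A` if it sends each
nonzero difference of elements of `A` uniformly to `W`. Together with a uniform translation it then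
sends any two distinct elements of `A` to independent uniform elements of `W`. -/
def PairwiseEquidistributed [Fintype W] (H : Finset (V →ₗ[F] W)) (A : Finset V) : Prop :=
  H.Nonempty ∧ ∀ y ∈ A, ∀ z ∈ A, z ≠ y → ∀ w, #{L ∈ H | L (z - y) = w} * Fintype.card W = #H

variable [Fintype W]

lemma exists_pairwiseEquidistributed [Finite F] (A : Finset V) :
    ∃ H : Finset (V →ₗ[F] W), PairwiseEquidistributed H A := by
  classical
  let U := Submodule.span F (A : Set V)
  have : Finite U := Module.finite_of_finite F
  have : Finite (U →ₗ[F] W) := DFunLike.finite _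
  have := Fintype.ofFinite (U →ₗ[F] W)
  obtain ⟨π, hπ⟩ := U.subtype.exists_leftInverse_of_injective U.ker_subtype
  have injective : Function.Injective fun L : U →ₗ[F] W ↦ L ∘ₗ π := fun L L' h ↦ by
    simpa [LinearMap.comp_assoc, hπ] using congrArg (· ∘ₗ U.subtype) h
  refine ⟨univ.map ⟨_, injective⟩, univ_nonempty.map, fun y hy z hz hne w ↦ ?_⟩
  let v : U := ⟨z - y, U.sub_mem (Submodule.subset_span hz) (Submodule.subset_span hy)⟩
  have hv : v ≠ 0 := fun h ↦ hne (sub_eq_zero.1 (congrArg Subtype.val h))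
  have hπv : π (z - y) = v := LinearMap.congr_fun hπ v
  rw [filter_map, card_map, card_map, card_univ, ← card_linearMap_apply_eq hv w]
  simp only [Function.comp_def, Function.Embedding.coeFn_mk, LinearMap.comp_apply, hπv]

namespace PairwiseEquidistributed

variable {H : Finset (V →ₗ[F] W)} {A : Finset V} {t : F}

open scoped Classical in
lemma card_interpolating (hH : PairwiseEquidistributed H A) {y z : V} (hy : y ∈ A) (hz : z ∈ A)
    (hne : z ≠ y) (b : W × W) :
    #{ω ∈ H ×ˢ (univ : Finset W) | (ω.1 y + ω.2, ω.1 z + ω.2) = b} * Fintype.card W = #H := by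
  rw [← hH.2 y hy z hz hne (b.2 - b.1)]
  congr 1
  refine card_bij (fun ω _ ↦ ω.1) (fun ω hω ↦ ?_) ?_ fun L hL ↦ ?_
  · obtain ⟨hωH, rfl⟩ := mem_filter.1 hω
    simpa using (mem_product.1 hωH).1
  · rintro ⟨L, σ⟩ hσ ⟨L', σ'⟩ hσ' (rfl : L = L')
    simpa using congrArg Prod.fst ((mem_filter.1 hσ).2.trans (mem_filter.1 hσ').2.symm)
  · obtain ⟨hLH, hL⟩ := mem_filter.1 hL
    rw [map_sub] at hL
    refine ⟨(L, b.1 - L y), ?_, rfl⟩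
    simp only [mem_filter, mem_product, mem_univ, hLH, true_and]
    exact Prod.ext (add_sub_cancel _ _) (by simp [add_sub_left_comm (L z), hL])

open scoped Classical in
lemma sum_card_affinePreimage (H : Finset (V →ₗ[F] W)) (A : Finset V) (S : Finset W) :
    ∑ ω ∈ H ×ˢ (univ : Finset W), #{x ∈ A | ω.1 x + ω.2 ∈ S} = #A * #S * #H := by
  simp_rw [sum_product, sum_card_filter_add_mem, sum_const, smul_eq_mul]
  ring

open scoped Classical in
lemma sum_card_nontrivialSolutions_affinePreimage (hH : PairwiseEquidistributed H A)
    (S : Finset W) :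
    (∑ ω ∈ H ×ˢ (univ : Finset W), #(nontrivialSolutions t {x ∈ A | ω.1 x + ω.2 ∈ S}))
      * Fintype.card W = #(nontrivialSolutions t A) * #(solutions t S) * #H := by
  let image (ω : (V →ₗ[F] W) × W) (p : V × V) : W × W := (ω.1 p.1 + ω.2, ω.1 p.2 + ω.2)
  have preimage_eq (ω : (V →ₗ[F] W) × W) : nontrivialSolutions t {x ∈ A | ω.1 x + ω.2 ∈ S}
      = {p ∈ nontrivialSolutions t A | image ω p ∈ solutions t S} := by
    ext p
    have image_third : ω.1 (p.1 + t • (p.2 - p.1)) + ω.2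
        = (image ω p).1 + t • ((image ω p).2 - (image ω p).1) := by
      simp only [image, map_add, map_smul, map_sub, add_sub_add_right_eq_sub]
      abel
    simp only [mem_nontrivialSolutions, mem_solutions, mem_filter, image_third, image]
    tauto
  have count_one : ∀ p ∈ nontrivialSolutions t A,
      #{ω ∈ H ×ˢ (univ : Finset W) | image ω p ∈ solutions t S} * Fintype.card W
        = #(solutions t S) * #H := fun p hp ↦ by
    obtain ⟨hp, hne⟩ := mem_nontrivialSolutions.1 hp
    obtain ⟨hy, hz, -⟩ := mem_solutions.1 hp
    have maps_to : Set.MapsTo (fun ω ↦ image ω p)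
        ({ω ∈ H ×ˢ univ | image ω p ∈ solutions t S} : Finset _) (solutions t S) :=
      fun ω hω ↦ (mem_filter.1 hω).2
    rw [card_eq_sum_card_fiberwise maps_to, sum_mul, ← smul_eq_mul, ← sum_const]
    refine sum_congr rfl fun b hb ↦ ?_
    rw [filter_filter, ← hH.card_interpolating hy hz hne b]
    congr 2
    ext ω
    simp only [mem_filter, image]
    constructor
    · exact fun h ↦ ⟨h.1, h.2.2⟩
    · exact fun h ↦ ⟨h.1, h.2 ▸ hb, h.2⟩
  simp_rw [preimage_eq, card_filter]
  rw [sum_comm, sum_mul]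
  simp_rw [← card_filter]
  rw [sum_congr rfl count_one, sum_const, smul_eq_mul, mul_assoc]

end PairwiseEquidistributed

-- First moment: some affine preimage of `S` has at least the expected number of elements of `A`
-- minus the expected number of nontrivial solutions, and the latter can be removed.
lemma exists_isCap_of_solutions [Finite F] (t : F) (A : Finset V) (S : Finset W) :
    ∃ I ⊆ A, IsCap 1 t I ∧
      (#A : ℝ) * #S * Fintype.card W - #(nontrivialSolutions t A) * #(solutions t S)
        ≤ #I * (Fintype.card W : ℝ) ^ 2 := by
  classical
  obtain ⟨H, hH⟩ := exists_pairwiseEquidistributed (F := F) (W := W) A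
  let B (ω : (V →ₗ[F] W) × W) : Finset V := {x ∈ A | ω.1 x + ω.2 ∈ S}
  set s := (#A : ℝ) * #S * Fintype.card W - #(nontrivialSolutions t A) * #(solutions t S) with hs
  have hW : (0 : ℝ) < Fintype.card W := Nat.cast_pos.2 Fintype.card_pos
  have total : ∑ ω ∈ H ×ˢ (univ : Finset W), s / (Fintype.card W : ℝ) ^ 2
      = ∑ ω ∈ H ×ˢ univ, ((#(B ω) : ℝ) - #(nontrivialSolutions t (B ω))) := by
    have size : ∑ ω ∈ H ×ˢ univ, (#(B ω) : ℝ) = #A * #S * #H :=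
      mod_cast PairwiseEquidistributed.sum_card_affinePreimage H A S
    have sols : (∑ ω ∈ H ×ˢ univ, (#(nontrivialSolutions t (B ω)) : ℝ)) * Fintype.card W
        = #(nontrivialSolutions t A) * #(solutions t S) * #H :=
      mod_cast hH.sum_card_nontrivialSolutions_affinePreimage S
    rw [sum_sub_distrib, size, eq_div_of_mul_eq hW.ne' sols, sum_const, card_product, card_univ,
      nsmul_eq_mul, hs]
    push_cast
    field_simp
  obtain ⟨ω, -, hω⟩ := exists_le_of_sum_le (hH.1.product univ_nonempty) total.le
  obtain ⟨I, hI, hcap, hcard⟩ := exists_isCap_card_le_add_nontrivialSolutions t (B ω)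
  refine ⟨I, hI.trans (filter_subset _ _), hcap, ?_⟩
  rw [div_le_iff₀ (by positivity)] at hω
  have hcard' : (#(B ω) : ℝ) ≤ #I + #(nontrivialSolutions t (B ω)) := mod_cast hcard
  exact hω.trans (by gcongr; linarith)

end AffinePreimages

section SparseSets

variable {F V W : Type*} [Field F] [AddCommGroup V] [Module F V] [AddCommGroup W] [Module F W]
  [Fintype W]

/-- `S` has density at least `η` in `W`, and only a proportion `β` of the `#S * |W|` pairs `(y, z)`
with `y ∈ S` and `z ∈ W` comes from a solution of `x = y + t (z - y)` in `S`. A random set of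
density `η` has `β = η ^ 2`; a Caro–Wei bound needs `β < η ^ 3`. -/
def IsSparse (t : F) (η β : ℝ) (S : Finset W) : Prop :=
  η * Fintype.card W ≤ #S ∧ (#(solutions t S) : ℝ) ≤ β * #S * Fintype.card W

namespace IsSparse

variable {t : F} {η β : ℝ} {S : Finset W}

lemma le_one (hS : IsSparse t η β S) : η ≤ 1 := by
  have hW : (0 : ℝ) < Fintype.card W := Nat.cast_pos.2 Fintype.card_pos
  have hSW : (#S : ℝ) ≤ Fintype.card W := mod_cast card_le_univ S
  exact le_of_mul_le_mul_right (by linarith [hS.1]) hW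

lemma piFinset {ι : Type*} [Fintype ι] [DecidableEq ι] (hS : IsSparse t η β S) (hη : 0 ≤ η) :
    IsSparse t (η ^ Fintype.card ι) (β ^ Fintype.card ι) (Fintype.piFinset fun _ : ι ↦ S) := by
  constructor
  · have := pow_le_pow_left₀ (by positivity) hS.1 (Fintype.card ι)
    simpa [mul_pow] using this
  · calc (#(solutions t (Fintype.piFinset fun _ : ι ↦ S)) : ℝ)
        ≤ (#(solutions t S) : ℝ) ^ Fintype.card ι := mod_cast card_solutions_piFinset_le t S
      _ ≤ (β * #S * Fintype.card W) ^ Fintype.card ι := by gcongr; exact hS.2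
      _ = _ := by simp [mul_pow]

lemma exists_isCap [Finite F] (hS : IsSparse t η β S) {A : Finset V} {d : ℝ} (hd : 0 ≤ d)
    (hdβ : d * β ≤ 1 / 2) (hA : (#(nontrivialSolutions t A) : ℝ) ≤ d * #A) :
    ∃ I ⊆ A, IsCap 1 t I ∧ η / 2 * #A ≤ #I := by
  obtain ⟨I, hIA, hcap, hI⟩ := exists_isCap_of_solutions t A S
  refine ⟨I, hIA, hcap, ?_⟩
  set w : ℝ := (Fintype.card W : ℝ)
  have hw : 0 < w := Nat.cast_pos.2 Fintype.card_pos
  have few_solutions : (#(nontrivialSolutions t A) : ℝ) * #(solutions t S)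
      ≤ 1 / 2 * (#A * #S * w) :=
    calc (#(nontrivialSolutions t A) : ℝ) * #(solutions t S)
        ≤ d * #A * (β * #S * w) := by gcongr; exact hS.2
      _ = d * β * (#A * #S * w) := by ring
      _ ≤ 1 / 2 * (#A * #S * w) := by gcongr
  have dense : #A * (η * w) * w ≤ #A * #S * w := by gcongr; exact hS.1
  exact le_of_mul_le_mul_right (by linarith) (pow_pos hw 2)

-- A tensor power of `S` is taken whose solution density is just below `1 / (2 d)`.
lemma exists_isCap_rpow [Finite F] {e : ℝ} (hS : IsSparse t (β ^ e) β S) (he : 0 ≤ e) (hβ : 0 < β)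
    (hβ1 : β < 1) {A : Finset V} {d : ℝ} (hd : 1 ≤ d)
    (hA : (#(nontrivialSolutions t A) : ℝ) ≤ d * #A) :
    ∃ I ⊆ A, IsCap 1 t I ∧ (β / 2) ^ e / 2 * #A * d ^ (-e) ≤ #I := by
  have hd0 : 0 < d := one_pos.trans_le hd
  obtain ⟨k, hk_lt, hk_le⟩ := exists_nat_pow_near_of_lt_one (x := 1 / (2 * d)) (by positivity)
    (by rw [div_le_one (by positivity)]; linarith) hβ hβ1
  have hSk := hS.piFinset (ι := Fin (k + 1)) (by positivity)
  rw [Fintype.card_fin] at hSk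
  obtain ⟨I, hIA, hcap, hI⟩ := hSk.exists_isCap hd0.le
    (calc d * β ^ (k + 1) ≤ d * (1 / (2 * d)) := by gcongr
      _ = 1 / 2 := by field_simp) hA
  refine ⟨I, hIA, hcap, le_trans ?_ hI⟩
  have density : (β / 2) ^ e * d ^ (-e) ≤ (β ^ e) ^ (k + 1) :=
    calc (β / 2) ^ e * d ^ (-e) = (β * (1 / (2 * d))) ^ e := by
          rw [Real.rpow_neg hd0.le, ← div_eq_mul_inv, ← Real.div_rpow (by positivity) hd0.le]
          congr 1
          field_simp
      _ ≤ (β * β ^ k) ^ e := by gcongr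
      _ = (β ^ e) ^ (k + 1) := by rw [← pow_succ', Real.rpow_pow_comm hβ.le]
  calc (β / 2) ^ e / 2 * #A * d ^ (-e) = (β / 2) ^ e * d ^ (-e) / 2 * #A := by ring
    _ ≤ (β ^ e) ^ (k + 1) / 2 * #A := by gcongr

end IsSparse

end SparseSets

section CaroWeiBound

/-- The Caro–Wei bound with constant `C` for the equation `x = y + t (z - y)` in all vector spaces
over `F`. -/
def HasCaroWeiBound (F : Type u) [Field F] (t : F) (C : ℝ) : Prop :=
  ∀ (V : Type v) [AddCommGroup V] [Module F V] (A : Finset V),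
    ∃ I ⊆ A, IsCap 1 t I ∧
      C * ∑ x ∈ A, ((#(solutionsAt t A x) : ℝ) + 1) ^ (-(1 / 3 : ℝ)) ≤ #I

lemma HasCaroWeiBound.mono {F : Type u} [Field F] {t : F} {C C' : ℝ}
    (h : HasCaroWeiBound.{u, v} F t C) (hC : C' ≤ C) : HasCaroWeiBound.{u, v} F t C' := by
  intro V _ _ A
  obtain ⟨I, hIA, hcap, hI⟩ := h V A
  exact ⟨I, hIA, hcap, le_trans (by gcongr) hI⟩

lemma mul_sum_rpow_neg_le_of_dyadic {α : Type*} {A : Finset α} {f : α → ℕ}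
    (hf : ∀ x ∈ A, f x ≠ 0) {c e s μ : ℝ} (hc : 0 < c) (hs : 0 ≤ s) (hes : e < s)
    (h : ∀ j, c * #{x ∈ A | Nat.log 2 (f x) = j} * (2 ^ (j + 1)) ^ (-e) ≤ μ) :
    c * 2 ^ (-e) * (1 - 2 ^ (e - s)) * ∑ x ∈ A, (f x : ℝ) ^ (-s) ≤ μ := by
  classical
  set ρ : ℝ := 2 ^ (e - s)
  have hρ0 : 0 < ρ := by positivity
  have hρ1 : ρ < 1 := Real.rpow_lt_one_of_one_lt_of_neg one_lt_two (by linarith)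
  have hμ : 0 ≤ μ := le_trans (by positivity) (h 0)
  set J := A.image fun x ↦ Nat.log 2 (f x)
  have level (j : ℕ) : c * 2 ^ (-e) * ∑ x ∈ A with Nat.log 2 (f x) = j, (f x : ℝ) ^ (-s)
      ≤ μ * ρ ^ j := by
    have term_le : ∀ x ∈ A.filter fun x ↦ Nat.log 2 (f x) = j,
        (f x : ℝ) ^ (-s) ≤ (2 ^ j) ^ (-s) := fun x hx ↦ by
      obtain ⟨hxA, hxj⟩ := mem_filter.1 hx
      have pow_le : (2 : ℝ) ^ j ≤ f x := mod_cast hxj ▸ Nat.pow_log_le_self 2 (hf x hxA)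
      exact Real.rpow_le_rpow_of_nonpos (by positivity) pow_le (by linarith)
    have exponents : (2 : ℝ) ^ (-e) * (2 ^ j) ^ (-s) = (2 ^ (j + 1)) ^ (-e) * ρ ^ j := by
      simp only [ρ, ← Real.rpow_natCast, ← Real.rpow_mul zero_le_two, ← Real.rpow_add two_pos]
      congr 1
      push_cast
      ring
    calc c * 2 ^ (-e) * ∑ x ∈ A with Nat.log 2 (f x) = j, (f x : ℝ) ^ (-s)
        ≤ c * 2 ^ (-e) * (#{x ∈ A | Nat.log 2 (f x) = j} * (2 ^ j) ^ (-s)) := by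
          gcongr
          simpa using sum_le_card_nsmul _ _ _ term_le
      _ = c * #{x ∈ A | Nat.log 2 (f x) = j} * (2 ^ (j + 1)) ^ (-e) * ρ ^ j := by
          linear_combination c * #{x ∈ A | Nat.log 2 (f x) = j} * exponents
      _ ≤ μ * ρ ^ j := by gcongr; exact h j
  have geometric : ∑ j ∈ J, ρ ^ j ≤ (1 - ρ)⁻¹ := by
    rw [← tsum_geometric_of_lt_one hρ0.le hρ1]
    exact (summable_geometric_of_lt_one hρ0.le hρ1).sum_le_tsum J fun _ _ ↦ by positivity
  calc c * 2 ^ (-e) * (1 - ρ) * ∑ x ∈ A, (f x : ℝ) ^ (-s)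
      = (1 - ρ) * ∑ j ∈ J, c * 2 ^ (-e) * ∑ x ∈ A with Nat.log 2 (f x) = j, (f x : ℝ) ^ (-s) := by
        rw [← mul_sum, sum_fiberwise_of_maps_to fun x hx ↦ mem_image_of_mem _ hx]
        ring
    _ ≤ (1 - ρ) * ∑ j ∈ J, μ * ρ ^ j :=
        mul_le_mul_of_nonneg_left (sum_le_sum fun j _ ↦ level j) (sub_nonneg.2 hρ1.le)
    _ ≤ (1 - ρ) * (μ * (1 - ρ)⁻¹) := by
        rw [← mul_sum]
        gcongr
    _ = μ := by field_simp [(sub_pos.2 hρ1).ne']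

lemma IsSparse.hasCaroWeiBound {F : Type u} [Field F] [Finite F] {t : F} {W : Type*}
    [AddCommGroup W] [Module F W] [Fintype W] {S : Finset W} {β e : ℝ}
    (hS : IsSparse t (β ^ e) β S) (he : 0 ≤ e) (he3 : e < 1 / 3) (hβ : 0 < β) (hβ1 : β < 1) :
    HasCaroWeiBound.{u, v} F t ((β / 2) ^ e / 2 * 2 ^ (-e) * (1 - 2 ^ (e - 1 / 3))) := by
  intro V _ _ A
  let f (x : V) : ℕ := #(solutionsAt t A x) + 1
  let D (j : ℕ) : Finset V := {x ∈ A | Nat.log 2 (f x) = j}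
  have degree_le (j : ℕ) : (#(nontrivialSolutions t (D j)) : ℝ) ≤ 2 ^ (j + 1) * #(D j) := by
    have hx : ∀ x ∈ D j, #(solutionsAt t A x) ≤ 2 ^ (j + 1) := fun x hx ↦ by
      have : #(solutionsAt t A x) + 1 < 2 ^ (j + 1) :=
        (mem_filter.1 hx).2 ▸ Nat.lt_pow_succ_log_self one_lt_two (f x)
      omega
    have := (card_nontrivialSolutions_le_sum_solutionsAt t (filter_subset _ A)).trans
      (sum_le_card_nsmul (D j) _ _ hx)
    rw [mul_comm]
    exact_mod_cast this
  choose I hID hcap hcard using fun j ↦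
    hS.exists_isCap_rpow he hβ hβ1 (one_le_pow₀ one_le_two) (degree_le j)
  obtain ⟨j₀, -, hj₀⟩ := exists_max_image (insert 0 (A.image fun x ↦ Nat.log 2 (f x)))
    (fun j ↦ #(I j)) (insert_nonempty _ _)
  refine ⟨I j₀, (hID j₀).trans (filter_subset _ _), hcap j₀, ?_⟩
  have dyadic (j : ℕ) : (β / 2) ^ e / 2 * #(D j) * (2 ^ (j + 1)) ^ (-e) ≤ (#(I j₀) : ℝ) := by
    by_cases hj : j ∈ A.image fun x ↦ Nat.log 2 (f x)
    · exact (hcard j).trans (mod_cast hj₀ j (mem_insert_of_mem hj))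
    · have : D j = ∅ := filter_eq_empty_iff.2 fun x hx h ↦ hj (mem_image.2 ⟨x, hx, h⟩)
      simp [this]
  simpa [f] using mul_sum_rpow_neg_le_of_dyadic (A := A) (f := f) (fun x _ ↦ Nat.succ_ne_zero _)
    (by positivity) (by norm_num) he3 dyadic

lemma exists_rpow_eq_of_lt_pow {η β : ℝ} {n : ℕ} (hη : 0 < η) (hη1 : η ≤ 1) (hβ : 0 < β)
    (hβη : β < η ^ n) : ∃ e : ℝ, 0 ≤ e ∧ e * n < 1 ∧ β ^ e = η := by
  have hlogβ : Real.log β < 0 := Real.log_neg hβ (hβη.trans_le (pow_le_one₀ hη.le hη1))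
  refine ⟨Real.log η / Real.log β,
    div_nonneg_of_nonpos (Real.log_nonpos hη.le hη1) hlogβ.le, ?_, ?_⟩
  · have := Real.log_lt_log hβ hβη
    rw [Real.log_pow] at this
    rw [div_mul_eq_mul_div, div_lt_iff_of_neg hlogβ]
    linarith
  · rw [Real.rpow_def_of_pos hβ, mul_div_cancel₀ _ hlogβ.ne, Real.exp_log hη]

lemma exists_hasCaroWeiBound_of_isSparse {η β : ℝ} (hη : 0 < η) (hβ : 0 < β) (hβη : β < η ^ 3) :
    ∃ C : ℝ, 0 < C ∧ ∀ (F : Type u) [Field F] [Finite F] (t : F) (W : Type u) [AddCommGroup W]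
      [Module F W] [Fintype W] (S : Finset W), IsSparse t η β S →
        HasCaroWeiBound.{u, v} F t C := by
  by_cases hη1 : η ≤ 1
  · obtain ⟨e, he, he3, rfl⟩ := exists_rpow_eq_of_lt_pow hη hη1 hβ hβη
    push_cast at he3
    have hρ : (2 : ℝ) ^ (e - 1 / 3) < 1 :=
      Real.rpow_lt_one_of_one_lt_of_neg one_lt_two (by linarith)
    have := sub_pos.2 hρ
    exact ⟨_, by positivity, fun F _ _ t W _ _ _ S hS ↦ hS.hasCaroWeiBound he (by linarith) hβ
      (hβη.trans_le (pow_le_one₀ hη.le hη1))⟩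
  · exact ⟨1, one_pos, fun F _ _ t W _ _ _ S hS ↦ absurd hS.le_one hη1⟩

end CaroWeiBound

section FieldCaps

lemma exists_anisotropic_binary (F : Type*) [Field F] [Finite F] :
    ∃ Q : QuadraticForm F (F × F), Q.Anisotropic := by
  have not_surjective : ¬ Function.Surjective fun x : F ↦ x * x + x := fun h ↦ by
    simpa using Finite.injective_iff_surjective.2 h (a₁ := 0) (a₂ := -1) (by simp)
  obtain ⟨γ, hγ⟩ := not_forall.1 not_surjective
  let f := LinearMap.fst F F F
  let g := LinearMap.snd F F F
  refine ⟨.linMulLin f f + .linMulLin f g + (-γ) • .linMulLin g g, fun ⟨u, v⟩ huv ↦ ?_⟩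
  replace huv : u * u + u * v - γ * (v * v) = 0 := by
    simpa [f, g, sub_eq_add_neg] using huv
  have hv : v = 0 := by
    by_contra hv
    refine hγ ⟨u / v, ?_⟩
    field_simp
    linear_combination huv
  subst hv
  simpa using huv

lemma IsCap.of_anisotropic {F E : Type*} [Field F] [AddCommGroup E] [Module F E]
    {Q : QuadraticForm F E} (hQ : Q.Anisotropic) {t : F} (ht0 : t ≠ 0) (ht1 : t ≠ 1)
    {C : Finset (E × F)} (hC : ∀ p ∈ C, p.2 = Q p.1) : IsCap 1 t C := by
  intro x hx y hy z hz h
  rw [one_smul] at h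
  have hx₁ : x.1 = y.1 + t • (z.1 - y.1) := eq_add_of_sub_eq' (congrArg Prod.fst h)
  have h₂ : Q x.1 - Q y.1 = t * (Q z.1 - Q y.1) := by
    rw [← hC x hx, ← hC y hy, ← hC z hz]
    exact congrArg Prod.snd h
  obtain ⟨d, hd⟩ : ∃ d, z.1 = y.1 + d := ⟨z.1 - y.1, by abel⟩
  rw [hx₁, hd, add_sub_cancel_left, QuadraticMap.map_add Q y.1, QuadraticMap.map_add Q y.1,
    QuadraticMap.map_smul, QuadraticMap.polar_smul_right, smul_eq_mul, smul_eq_mul] at h₂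
  have hQd : t * (t - 1) * Q d = 0 := by linear_combination h₂
  have hd0 : d = 0 :=
    hQ d ((mul_eq_zero.1 hQd).resolve_left (mul_ne_zero ht0 (sub_ne_zero.2 ht1)))
  rw [hd0, add_zero] at hd
  have hzy : z = y := Prod.ext hd (by rw [hC z hz, hC y hy, hd])
  subst hzy
  exact ⟨by simpa [sub_eq_zero] using h, rfl⟩

lemma exists_isCap_card_eq_sq {F : Type*} [Field F] [Finite F] {t : F} (ht0 : t ≠ 0)
    (ht1 : t ≠ 1) : ∃ C : Finset ((F × F) × F), IsCap 1 t C ∧ #C = Nat.card F ^ 2 := by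
  classical
  have := Fintype.ofFinite F
  obtain ⟨Q, hQ⟩ := exists_anisotropic_binary F
  refine ⟨univ.image fun v ↦ (v, Q v), .of_anisotropic hQ ht0 ht1 (by simp), ?_⟩
  rw [card_image_of_injective _ fun u v h ↦ congrArg Prod.fst h]
  simp [sq]

section MarkedTuples

variable {U : Type*} [DecidableEq U]

/-- The tuples having exactly one coordinate equal to a marker `w ∉ C` and all others in the cap
`C`. In a solution the position of the markers is the only freedom left, which makes these sets
sparse although they have many elements. -/
def markedTuples (C : Finset U) (w : U) (n : ℕ) : Finset (Fin (n + 1) → U) :=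
  (univ ×ˢ Fintype.piFinset fun _ : Fin n ↦ C).image fun p ↦ Fin.insertNth p.1 w p.2

variable {C : Finset U} {w : U} {n : ℕ}

lemma exists_eq_of_mem_markedTuples {p : Fin (n + 1) → U} (hp : p ∈ markedTuples C w n) :
    ∃ i, p i = w ∧ ∀ j ≠ i, p j ∈ C := by
  obtain ⟨⟨i, f⟩, hf, rfl⟩ := mem_image.1 hp
  refine ⟨i, by simp, fun j hj ↦ ?_⟩
  obtain ⟨l, rfl⟩ := Fin.exists_succAbove_eq hj
  simpa using Fintype.mem_piFinset.1 (mem_product.1 hf).2 l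

lemma card_markedTuples (hw : w ∉ C) : #(markedTuples C w n) = (n + 1) * #C ^ n := by
  rw [markedTuples, card_image_of_injOn, card_product, card_univ, Fintype.card_fin,
    Fintype.card_piFinset_const]
  rintro ⟨i, f⟩ _ ⟨i', f'⟩ hf' h
  replace h : i.insertNth (α := fun _ ↦ U) w f = i'.insertNth w f' := h
  have hi : i = i' := by
    by_contra hne
    obtain ⟨l, hl⟩ := Fin.exists_succAbove_eq hne
    have hil := congrFun h i
    rw [Fin.insertNth_apply_same, ← hl, Fin.insertNth_apply_succAbove] at hil
    exact hw (hil ▸ Fintype.mem_piFinset.1 (mem_product.1 hf').2 l)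
  subst hi
  exact Prod.ext rfl (Fin.insertNth_right_injective (α := fun _ ↦ U) w h)

variable {F : Type*} [Field F] [AddCommGroup U] [Module F U] [Fintype U] {t : F}

lemma IsCap.card_solutions_markedTuples_le (hC : IsCap 1 t C) (ht : t ≠ 0) :
    #(solutions t (markedTuples C w n))
      ≤ #(markedTuples C w n) * ((n + 1) * ((n + 1) * Fintype.card U)) := by
  set S := markedTuples C w n
  choose! pos hpos hmem using fun p (hp : p ∈ S) ↦ exists_eq_of_mem_markedTuples hp
  let third (p : (Fin (n + 1) → U) × (Fin (n + 1) → U)) := p.1 + t • (p.2 - p.1)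
  have card_codes : #(S ×ˢ (univ : Finset (Fin (n + 1) × Fin (n + 1) × U)))
      = #S * ((n + 1) * ((n + 1) * Fintype.card U)) := by simp [card_product]
  rw [← card_codes]
  refine card_le_card_of_injOn (fun p ↦ (p.1, pos (third p), pos p.2, p.2 (pos p.1))) ?_ ?_
  · exact fun p hp ↦ mem_product.2 ⟨(mem_solutions.1 hp).1, mem_univ _⟩
  rintro ⟨y, z⟩ hp ⟨y', z'⟩ hp' h
  simp only [Prod.mk.injEq] at h
  obtain ⟨rfl, hx, hz, hy⟩ := h
  obtain ⟨yS, zS, xS⟩ := mem_solutions.1 hp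
  obtain ⟨-, zS', xS'⟩ := mem_solutions.1 hp'
  have eq_of_not_pos {z : Fin (n + 1) → U} (zS : z ∈ S) (xS : third (y, z) ∈ S) {l : Fin (n + 1)}
      (ly : l ≠ pos y) (lz : l ≠ pos z) (lx : l ≠ pos (third (y, z))) : z l = y l :=
    (hC _ (hmem _ xS l lx) _ (hmem _ yS l ly) _ (hmem _ zS l lz) (by simp [third])).2
  simp only [Prod.mk.injEq, true_and]
  funext l
  by_cases ly : l = pos y
  · rw [ly, hy]
  by_cases lz : l = pos z
  · rw [lz, hpos z zS, hz, hpos z' zS']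
  by_cases lx : l = pos (third (y, z))
  · have hxl : third (y, z) l = third (y, z') l := by
      rw [lx]
      exact (hpos _ xS).trans (hx ▸ hpos _ xS').symm
    exact sub_left_injective (smul_right_injective U ht (add_left_cancel hxl))
  · exact (eq_of_not_pos zS xS ly lz lx).trans
      (eq_of_not_pos zS' xS' ly (hz ▸ lz) (hx ▸ lx)).symm

end MarkedTuples

lemma markedTuples_density_lt {q : ℝ} {M : ℕ} (hq : 0 < q) (hM : q ^ 9 < M + 1) :
    (M + 1) ^ 2 * q ^ 3 / q ^ (3 * M + 3) < ((M + 1) * q ^ (2 * M) / q ^ (3 * M + 3)) ^ 3 := calc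
  _ = (M + 1) ^ 2 * q ^ (6 * M) * q ^ 9 / (q ^ (3 * M + 3)) ^ 3 := by
    field_simp
    ring
  _ < (M + 1) ^ 2 * q ^ (6 * M) * (M + 1) / (q ^ (3 * M + 3)) ^ 3 := by gcongr
  _ = ((M + 1) * q ^ (2 * M) / q ^ (3 * M + 3)) ^ 3 := by
    field_simp
    ring

lemma exists_isSparse_of_finite_field {F : Type*} [Field F] [Finite F] {t : F} (ht0 : t ≠ 0)
    (ht1 : t ≠ 1) :
    ∃ n, ∃ S : Finset (Fin n → (F × F) × F), ∃ _ : Fintype (Fin n → (F × F) × F),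
      ∃ η β : ℝ, 0 < η ∧ 0 < β ∧ β < η ^ 3 ∧ IsSparse t η β S := by
  classical
  have := Fintype.ofFinite F
  obtain ⟨C, hC, card_C⟩ := exists_isCap_card_eq_sq ht0 ht1
  rw [Nat.card_eq_fintype_card] at card_C
  obtain ⟨w, hw⟩ : ∃ w, w ∉ C := by
    refine not_forall.1 fun h ↦ card_C.not_gt ?_
    rw [eq_univ_of_forall h, card_univ, Fintype.card_prod, Fintype.card_prod, sq]
    exact lt_mul_of_one_lt_right (by positivity) Fintype.one_lt_card
  set q : ℝ := (Fintype.card F : ℝ)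
  have hq : 0 < q := Nat.cast_pos.2 Fintype.card_pos
  let M := Fintype.card F ^ 9
  have hM : q ^ 9 < M + 1 := by simp [M, q]
  have card_W : (Fintype.card (Fin (M + 1) → (F × F) × F) : ℝ) = q ^ (3 * M + 3) := by
    simp only [Fintype.card_pi, Fintype.card_prod, prod_const, card_univ, Fintype.card_fin, q]
    push_cast
    ring
  have card_S : (#(markedTuples C w M) : ℝ) = (M + 1) * q ^ (2 * M) := by
    rw [card_markedTuples hw, card_C, pow_mul]
    push_cast
    rfl
  refine ⟨M + 1, markedTuples C w M, inferInstance, (M + 1) * q ^ (2 * M) / q ^ (3 * M + 3),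
    (M + 1) ^ 2 * q ^ 3 / q ^ (3 * M + 3), by positivity, by positivity, ?_, ?_, ?_⟩
  · exact markedTuples_density_lt hq hM
  · rw [card_W, card_S, div_mul_cancel₀ _ (by positivity)]
  · have solutions_le : (#(solutions t (markedTuples C w M)) : ℝ)
        ≤ #(markedTuples C w M) * ((M + 1) * ((M + 1) * q ^ 3)) := by
      refine (Nat.cast_le.2 (hC.card_solutions_markedTuples_le ht0)).trans_eq ?_
      simp only [Fintype.card_prod, q]
      push_cast
      ring
    rw [card_W]
    exact solutions_le.trans_eq (by field_simp)

lemma card_nontrivialSolutions_le_sq {R M : Type*} [Ring R] [AddCommGroup M] [Module R M] (t : R)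
    (S : Finset M) : #(nontrivialSolutions t S) ≤ #S * #S := by
  classical
  rw [← card_product]
  exact card_le_card ((filter_subset _ _).trans (filter_subset _ _))

lemma IsSparse.exists_isCap_fin_fun {F W : Type*} [Field F] [Fintype F] [AddCommGroup W]
    [Module F W] [Fintype W] {t : F} {β e : ℝ} {S : Finset W} (hS : IsSparse t (β ^ e) β S)
    (he : 0 ≤ e) (he3 : e < 1 / 3) (hβ : 0 < β) (hβ1 : β < 1) :
    ∃ m : ℕ, 1 ≤ m ∧ ∃ C : Finset (Fin m → F), IsCap 1 t C ∧
      Fintype.card F ^ (2 * m) < #C ^ 3 := by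
  set q : ℝ := (Fintype.card F : ℝ)
  set c : ℝ := (β / 2) ^ e / 2
  have : 0 < c := by positivity
  have hq : 1 < q := Nat.one_lt_cast.2 Fintype.one_lt_card
  have hqe : 1 < q ^ (1 - 3 * e) := Real.one_lt_rpow hq (by linarith)
  obtain ⟨n, hn⟩ := pow_unbounded_of_one_lt (1 / c ^ 3) hqe
  set X : ℝ := q ^ (n + 1) with hX
  have hX0 : 0 < X := by positivity
  have card_univ_eq : (#(univ : Finset (Fin (n + 1) → F)) : ℝ) = X := by simp [X, q]
  obtain ⟨C, -, hC, hcard⟩ := hS.exists_isCap_rpow he hβ hβ1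
    (A := (univ : Finset (Fin (n + 1) → F))) (d := X) (one_le_pow₀ hq.le) (by
      rw [← card_univ_eq]
      exact_mod_cast card_nontrivialSolutions_le_sq t _)
  refine ⟨n + 1, n.succ_pos, C, hC, ?_⟩
  rw [card_univ_eq] at hcard
  have large : 1 < c ^ 3 * X ^ (1 - 3 * e) := by
    rw [hX, ← Real.rpow_pow_comm (by positivity), ← div_lt_iff₀' (by positivity)]
    exact hn.trans (pow_lt_pow_right₀ hqe n.lt_succ_self)
  refine Nat.cast_lt (α := ℝ) |>.1 ?_
  push_cast
  calc q ^ (2 * (n + 1)) = X ^ 2 * 1 := by rw [hX]; ring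
    _ < X ^ 2 * (c ^ 3 * X ^ (1 - 3 * e)) := by gcongr
    _ = (c * X * X ^ (-e)) ^ 3 := by
        rw [mul_pow, mul_pow, ← Real.rpow_mul_natCast hX0.le, sub_eq_add_neg,
          Real.rpow_add hX0, Real.rpow_one]
        push_cast
        rw [show -(3 * e) = -e * 3 by ring]
        ring
    _ ≤ (#C : ℝ) ^ 3 := by gcongr

lemma exists_isCap_card_pow_lt {F : Type*} [Field F] [Fintype F] {t : F} (ht0 : t ≠ 0)
    (ht1 : t ≠ 1) : ∃ m : ℕ, 1 ≤ m ∧ ∃ C : Finset (Fin m → F), IsCap 1 t C ∧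
      Fintype.card F ^ (2 * m) < #C ^ 3 := by
  obtain ⟨n, S, _, η, β, hη, hβ, hβη, hS⟩ := exists_isSparse_of_finite_field ht0 ht1
  obtain ⟨e, he, he3, rfl⟩ := exists_rpow_eq_of_lt_pow hη hS.le_one hβ hβη
  push_cast at he3
  exact hS.exists_isCap_fin_fun he (by linarith) hβ (hβη.trans_le (pow_le_one₀ hη.le hS.le_one))

end FieldCaps

section ModuleCaps

namespace IsCap

variable {R M M' M'' : Type*} [Ring R] [AddCommGroup M] [Module R M] [AddCommGroup M']
  [Module R M'] [AddCommGroup M''] [Module R M''] {p q : R}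

lemma image [DecidableEq M'] {C : Finset M} (hC : IsCap p q C) {f : M →ₗ[R] M'}
    (hf : Function.Injective f) : IsCap p q (C.image f) := by
  simp only [IsCap, forall_mem_image, ← map_sub, ← map_smul, hf.eq_iff]
  exact hC

lemma piFinset {ι : Type*} [Fintype ι] [DecidableEq ι] {C : Finset M} (hC : IsCap p q C) :
    IsCap p q (Fintype.piFinset fun _ : ι ↦ C) := by
  intro x hx y hy z hz h
  rw [Fintype.mem_piFinset] at hx hy hz
  have coord i := hC _ (hx i) _ (hy i) _ (hz i) (congrFun h i)
  exact ⟨funext fun i ↦ (coord i).1, funext fun i ↦ (coord i).2⟩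

lemma exists_of_extension {C' : Finset M'} {C'' : Finset M''} (hC' : IsCap p q C')
    (hC'' : IsCap p q C'') {f : M' →ₗ[R] M} {g : M →ₗ[R] M''} (hf : Function.Injective f)
    (hg : Function.Surjective g) (hgf : g ∘ₗ f = 0) :
    ∃ C : Finset M, IsCap p q C ∧ #C = #C'' * #C' := by
  classical
  let lift (c : M'' × M') : M := Function.surjInv hg c.1 + f c.2
  have map_lift (c : M'' × M') : g (lift c) = c.1 := by
    simpa [lift, Function.surjInv_eq] using LinearMap.congr_fun hgf c.2
  have injective : Function.Injective lift := by
    rintro ⟨a, b⟩ ⟨a', b'⟩ h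
    obtain rfl : a = a' := by simpa only [map_lift] using congrArg g h
    exact Prod.ext rfl (hf (add_left_cancel h))
  refine ⟨(C'' ×ˢ C').image lift, ?_, by rw [card_image_of_injective _ injective, card_product]⟩
  simp only [IsCap, forall_mem_image, mem_product, injective.eq_iff, Prod.forall, Prod.mk.injEq]
  rintro x x' ⟨hx, hx'⟩ y y' ⟨hy, hy'⟩ z z' ⟨hz, hz'⟩ h
  obtain ⟨rfl, rfl⟩ := hC'' x hx y hy z hz (by
    simpa only [map_smul, map_sub, map_lift] using congrArg g h)
  obtain ⟨rfl, rfl⟩ := hC' x' hx' y' hy' z' hz' (hf (by simpa [lift] using h))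
  exact ⟨⟨rfl, rfl⟩, rfl, rfl⟩

end IsCap

/-- The `m`-th power of `Q` contains a cap of density exponent at least `2 / 3 + 1 / (3 m r)`, so
that caps in powers of `Q` beat the exponent `2 / 3` by a margin depending on `m` and `r` only. -/
def HasPowerCap {R : Type*} [Ring R] (p q : R) (m r : ℕ) (Q : Type*) [AddCommGroup Q]
    [Module R Q] : Prop :=
  ∃ C : Finset (Fin m → Q), IsCap p q C ∧ Nat.card Q ^ (2 * m * r + 1) ≤ #C ^ (3 * r)

namespace HasPowerCap

variable {R Q Q' : Type*} [Ring R] [AddCommGroup Q] [Module R Q] [AddCommGroup Q']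
  [Module R Q'] {p q : R} {m r : ℕ}

lemma of_subsingleton [Subsingleton Q] : HasPowerCap p q m r Q :=
  ⟨{0}, fun _ _ _ _ _ _ _ ↦ ⟨Subsingleton.elim _ _, Subsingleton.elim _ _⟩, by simp⟩

lemma of_linearEquiv (h : HasPowerCap p q m r Q) (e : Q ≃ₗ[R] Q') : HasPowerCap p q m r Q' := by
  classical
  obtain ⟨C, hC, hcard⟩ := h
  have injective : Function.Injective (e.toLinearMap.compLeft (Fin m)) := e.injective.comp_left
  refine ⟨C.image (e.toLinearMap.compLeft (Fin m)), hC.image injective, ?_⟩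
  rwa [card_image_of_injective _ injective, ← Nat.card_congr e.toEquiv]

lemma mono_right [Finite Q] (h : HasPowerCap p q m r Q) (hr : r ≠ 0) {r' : ℕ} (hrr' : r ≤ r') :
    HasPowerCap p q m r' Q := by
  obtain ⟨C, hC, hcard⟩ := h
  have card_pos : 0 < Nat.card Q := Nat.card_pos
  have two_thirds : Nat.card Q ^ (2 * m) ≤ #C ^ 3 := by
    refine le_of_pow_le_pow_left₀ hr (by positivity) ?_
    rw [← pow_mul, ← pow_mul]
    exact (Nat.pow_le_pow_right card_pos (Nat.le_succ _)).trans hcard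
  obtain ⟨s, rfl⟩ := Nat.exists_eq_add_of_le hrr'
  refine ⟨C, hC, ?_⟩
  calc Nat.card Q ^ (2 * m * (r + s) + 1)
      = Nat.card Q ^ (2 * m * r + 1) * (Nat.card Q ^ (2 * m)) ^ s := by ring
    _ ≤ #C ^ (3 * r) * (#C ^ 3) ^ s := by gcongr
    _ = #C ^ (3 * (r + s)) := by ring

lemma mul_left [Finite Q] (h : HasPowerCap p q m r Q) {k : ℕ} (hk : k ≠ 0) :
    HasPowerCap p q (k * m) r Q := by
  classical
  obtain ⟨C, hC, hcard⟩ := h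
  let e : (Fin k → Fin m → Q) ≃ₗ[ℤ] (Fin (k * m) → Q) :=
    (LinearEquiv.curry ℤ Q (Fin k) (Fin m)).symm ≪≫ₗ
      LinearEquiv.funCongrLeft ℤ Q finProdFinEquiv.symm
  let e' : (Fin k → Fin m → Q) →ₗ[R] (Fin (k * m) → Q) :=
    { e with map_smul' := fun _ _ ↦ rfl }
  have injective : Function.Injective e' := e.injective
  refine ⟨(Fintype.piFinset fun _ : Fin k ↦ C).image e', hC.piFinset.image injective, ?_⟩
  rw [card_image_of_injective _ injective, Fintype.card_piFinset_const]
  calc Nat.card Q ^ (2 * (k * m) * r + 1) ≤ Nat.card Q ^ ((2 * m * r + 1) * k) :=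
        Nat.pow_le_pow_right Nat.card_pos (by
          have := Nat.pos_of_ne_zero hk
          linarith)
    _ = (Nat.card Q ^ (2 * m * r + 1)) ^ k := pow_mul _ _ _
    _ ≤ (#C ^ (3 * r)) ^ k := by gcongr
    _ = (#C ^ k) ^ (3 * r) := pow_right_comm _ _ _

lemma of_quotient (N : Submodule R Q) (hN : HasPowerCap p q m r N)
    (hQN : HasPowerCap p q m r (Q ⧸ N)) : HasPowerCap p q m r Q := by
  obtain ⟨C', hC', hcard'⟩ := hN
  obtain ⟨C'', hC'', hcard''⟩ := hQN
  obtain ⟨C, hC, hcard⟩ := hC'.exists_of_extension hC'' (f := N.subtype.compLeft (Fin m))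
    (g := N.mkQ.compLeft (Fin m)) N.injective_subtype.comp_left N.mkQ_surjective.comp_left
    (by ext; simp)
  refine ⟨C, hC, ?_⟩
  rw [hcard, Submodule.card_eq_card_quotient_mul_card N, mul_pow, mul_pow]
  exact Nat.mul_comm (#C'' ^ _) _ ▸ Nat.mul_le_mul hcard' hcard''

end HasPowerCap

lemma exists_hasPowerCap_of_pow_lt {R Q : Type*} [Ring R] [AddCommGroup Q] [Module R Q] [Finite Q]
    {p q : R} {m : ℕ} {C : Finset (Fin m → Q)} (hC : IsCap p q C)
    (hcard : Nat.card Q ^ (2 * m) < #C ^ 3) : ∃ r, r ≠ 0 ∧ HasPowerCap p q m r Q := by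
  have card_pos : (0 : ℝ) < Nat.card Q := Nat.cast_pos.2 Nat.card_pos
  have ratio : 1 < (#C : ℝ) ^ 3 / (Nat.card Q : ℝ) ^ (2 * m) := by
    rw [one_lt_div (by positivity)]
    exact_mod_cast hcard
  obtain ⟨r, hr⟩ := pow_unbounded_of_one_lt (Nat.card Q : ℝ) ratio
  refine ⟨r + 1, r.succ_ne_zero, C, hC, ?_⟩
  have large := hr.le.trans (pow_le_pow_right₀ ratio.le r.le_succ)
  rw [div_pow, le_div_iff₀ (by positivity), ← pow_mul, ← pow_mul, ← pow_succ'] at large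
  exact_mod_cast large

section CommRing

variable {R : Type*} [CommRing R] {p q : R}

lemma exists_hasPowerCap_quotient_maximal (I : Ideal R) [I.IsMaximal] [Finite (R ⧸ I)]
    (hp : p ∉ I) (hq : q ∉ I) (hqp : q - p ∉ I) :
    ∃ m r, m ≠ 0 ∧ r ≠ 0 ∧ HasPowerCap p q m r (R ⧸ I) := by
  let _ := Ideal.Quotient.field I
  have := Fintype.ofFinite (R ⧸ I)
  let π := Ideal.Quotient.mk I
  have hπp : π p ≠ 0 := mt Ideal.Quotient.eq_zero_iff_mem.1 hp
  have hπq : π q ≠ 0 := mt Ideal.Quotient.eq_zero_iff_mem.1 hq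
  have ne_one : π q / π p ≠ 1 := by
    rw [Ne, div_eq_one_iff_eq hπp, Ideal.Quotient.eq]
    exact hqp
  obtain ⟨m, hm, C, hC, hcard⟩ := exists_isCap_card_pow_lt (div_ne_zero hπq hπp) ne_one
  rw [← Nat.card_eq_fintype_card] at hcard
  have hC' : IsCap p q C := fun x hx y hy z hz h ↦ hC x hx y hy z hz <| by
    funext i
    have hi : π p * (x i - y i) = π q * (z i - y i) := congrFun h i
    simp only [Pi.smul_apply, Pi.sub_apply, smul_eq_mul, one_mul]
    rw [div_mul_eq_mul_div, eq_div_iff hπp, ← hi, mul_comm]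
  obtain ⟨r, hr, hcap⟩ := exists_hasPowerCap_of_pow_lt hC' hcard
  exact ⟨m, r, by omega, hr, hcap⟩

lemma HasPowerCap.of_isFiniteLength {m r : ℕ} {Q : Type*} [AddCommGroup Q] [Module R Q]
    (hQ : IsFiniteLength R Q)
    (h : ∀ I : Ideal R, I.IsMaximal → Module.annihilator R Q ≤ I → HasPowerCap p q m r (R ⧸ I)) :
    HasPowerCap p q m r Q := by
  induction hQ with
  | of_subsingleton => exact .of_subsingleton
  | @of_simple_quotient M _ _ N simple _ ih =>
    refine .of_quotient N (ih fun I hI hNI ↦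
      h I hI ((N.subtype.annihilator_le_of_injective N.injective_subtype).trans hNI)) ?_
    obtain ⟨I, hI, ⟨e⟩⟩ := isSimpleModule_iff_quot_maximal.1 simple
    refine (h I hI ?_).of_linearEquiv e.symm
    calc Module.annihilator R M ≤ Module.annihilator R (M ⧸ N) :=
          N.mkQ.annihilator_le_of_surjective N.mkQ_surjective
      _ = I := by rw [e.annihilator_eq, Ideal.annihilator_quotient]

lemma finite_setOf_ideal_ge (J : Ideal R) [Finite (R ⧸ J)] : {I : Ideal R | J ≤ I}.Finite := by
  have : {I | Ideal.comap (Ideal.Quotient.mk J) ⊥ ≤ I}.Finite :=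
    .of_equiv _ (Ideal.relIsoOfSurjective _ Ideal.Quotient.mk_surjective).toEquiv
  simpa [← RingHom.ker_eq_comap_bot] using this

lemma exists_forall_hasPowerCap (J : Ideal R) [Finite (R ⧸ J)]
    (hJ : ∀ I : Ideal R, I.IsMaximal → J ≤ I → p ∉ I ∧ q ∉ I ∧ q - p ∉ I) :
    ∃ m r, ∀ (Q : Type v) [AddCommGroup Q] [Module R Q] [Finite Q],
      J ≤ (Module.annihilator R Q).radical → HasPowerCap p q m r Q := by
  classical
  let 𝓘 := {I : Ideal R | J ≤ I ∧ I.IsMaximal}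
  have h𝓘 : 𝓘.Finite := (finite_setOf_ideal_ge J).subset fun I hI ↦ hI.1
  have finite_quotient {I : Ideal R} (hI : J ≤ I) : Finite (R ⧸ I) :=
    Finite.of_surjective _ (Ideal.Quotient.factor_surjective hI)
  have each (I : Ideal R) (hI : I ∈ 𝓘) : ∃ m r, m ≠ 0 ∧ r ≠ 0 ∧ HasPowerCap p q m r (R ⧸ I) := by
    obtain ⟨hJI, hmax⟩ := hI
    have := finite_quotient hJI
    obtain ⟨hp, hq, hqp⟩ := hJ I hmax hJI
    exact exists_hasPowerCap_quotient_maximal I hp hq hqp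
  choose! m r hm hr hcap using each
  refine ⟨∏ I ∈ h𝓘.toFinset, m I, ∑ I ∈ h𝓘.toFinset, r I, fun Q _ _ _ hQ ↦ ?_⟩
  refine .of_isFiniteLength (isFiniteLength_iff_isNoetherian_isArtinian.2
    ⟨inferInstance, inferInstance⟩) fun I hmax hI ↦ ?_
  have hJI : J ≤ I := hQ.trans ((hmax.isPrime.radical_le_iff).2 hI)
  have := finite_quotient hJI
  have hI𝓘 : I ∈ h𝓘.toFinset := h𝓘.mem_toFinset.2 ⟨hJI, hmax⟩
  have uniform_r := (hcap I ⟨hJI, hmax⟩).mono_right (hr I ⟨hJI, hmax⟩)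
    (single_le_sum (fun _ _ ↦ Nat.zero_le _) hI𝓘)
  rw [← prod_erase_mul _ _ hI𝓘]
  exact uniform_r.mul_left (prod_ne_zero_iff.2 fun I' hI' ↦
    hm I' (h𝓘.mem_toFinset.1 (mem_of_mem_erase hI')))

end CommRing

end ModuleCaps

section Fourier

lemma half_le_re_stdAddChar {p : ℕ} [NeZero p] {r : ℤ} (hr : 6 * |r| ≤ p) :
    (1 / 2 : ℝ) ≤ (ZMod.stdAddChar (r : ZMod p) : ℂ).re := by
  have hp : (0 : ℝ) < p := Nat.cast_pos.2 (NeZero.pos p)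
  have angle : |2 * Real.pi * r / p| ≤ Real.pi / 3 := by
    have hr' : 6 * |(r : ℝ)| ≤ p := mod_cast hr
    rw [abs_div, abs_mul, abs_of_pos Real.two_pi_pos, abs_of_pos hp, div_le_iff₀ hp]
    nlinarith [Real.pi_pos]
  have exponent : (2 * Real.pi * Complex.I * r / p : ℂ)
      = ((2 * Real.pi * r / p : ℝ) : ℂ) * Complex.I := by
    push_cast
    ring
  rw [ZMod.stdAddChar_coe, exponent, Complex.exp_ofReal_mul_I_re, ← Real.cos_abs,
    ← Real.cos_pi_div_three]
  exact Real.cos_le_cos_of_nonneg_of_le_pi (abs_nonneg _) (by linarith [Real.pi_pos]) angle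

lemma sum_norm_sq_sum_addChar {R : Type*} [CommRing R] [Fintype R] {ψ : AddChar R ℂ}
    (hψ : ψ.IsPrimitive) (T : Finset R) :
    ∑ w, ‖∑ v ∈ T, ψ (w * v)‖ ^ 2 = Fintype.card R * #T := by
  classical
  have expand (w : R) : (‖∑ v ∈ T, ψ (w * v)‖ : ℂ) ^ 2
      = ∑ v ∈ T, ∑ v' ∈ T, ψ (w * (v - v')) := by
    rw [← Complex.mul_conj', map_sum, sum_mul_sum]
    refine sum_congr rfl fun v _ ↦ sum_congr rfl fun v' _ ↦ ?_
    rw [← AddChar.map_neg_eq_conj, ← AddChar.map_add_eq_mul, mul_sub, sub_eq_add_neg]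
  have orthogonality : ∀ v ∈ T, ∑ w, ∑ v' ∈ T, ψ (w * (v - v')) = Fintype.card R := fun v hv ↦ by
    rw [sum_comm]
    simp_rw [AddChar.sum_mulShift _ hψ, sub_eq_zero]
    simp [hv]
  refine Complex.ofReal_injective ?_
  push_cast
  simp_rw [expand]
  rw [sum_comm, sum_congr rfl orthogonality]
  simp [mul_comm]

-- Every `e ∈ E` is a large Fourier coefficient of the indicator of `T`; compare with Parseval.
lemma card_mul_card_le_of_small_phase {F : Type*} [Field F] [Fintype F] {p : ℕ} [NeZero p]
    {χ : F →+ ZMod p} (hχ : χ ≠ 0) {E T : Finset F}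
    (h : ∀ e ∈ E, ∀ v ∈ T, ∃ r : ℤ, 6 * |r| ≤ p ∧ (r : ZMod p) = χ (e * v)) :
    #T * #E ≤ 4 * Fintype.card F := by
  let ψ : AddChar F ℂ := (ZMod.stdAddChar (N := p)).compAddMonoidHom χ
  have hψ : ψ ≠ 1 := fun h ↦ hχ <| AddMonoidHom.ext fun x ↦ ZMod.injective_stdAddChar <| by
    rw [AddMonoidHom.zero_apply, AddChar.map_zero_eq_one]
    exact DFunLike.congr_fun h x
  have large_coefficient : ∀ e ∈ E, (#T / 2 : ℝ) ≤ ‖∑ v ∈ T, ψ (e * v)‖ := fun e he ↦ by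
    refine le_trans ?_ (Complex.re_le_norm _)
    rw [Complex.re_sum, div_eq_mul_one_div, ← nsmul_eq_mul]
    refine card_nsmul_le_sum _ _ _ fun v hv ↦ ?_
    obtain ⟨r, hr, hrχ⟩ := h e he v hv
    exact (half_le_re_stdAddChar hr).trans_eq (by rw [hrχ]; rfl)
  have energy : (#E : ℝ) * (#T / 2) ^ 2 ≤ Fintype.card F * #T := by
    rw [← sum_norm_sq_sum_addChar (AddChar.IsPrimitive.of_ne_one hψ), ← nsmul_eq_mul]
    refine (card_nsmul_le_sum E _ _ fun e he ↦ ?_).trans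
      (sum_le_univ_sum_of_nonneg fun _ ↦ by positivity)
    exact pow_le_pow_left₀ (by positivity) (large_coefficient e he) 2
  rcases (#T).eq_zero_or_pos with hT | hT
  · simp [hT]
  · have hT' : (0 : ℝ) < #T := Nat.cast_pos.2 hT
    have : (#T * #E : ℝ) ≤ 4 * Fintype.card F := le_of_mul_le_mul_right (by linarith) hT'
    exact_mod_cast this

end Fourier

section Pigeonhole

lemma abs_sub_mul_lt_of_mul_div_eq {a b H p : ℕ} (hp : 0 < p) (h : a * H / p = b * H / p) :
    |(a - b : ℤ)| * H < p := by
  have ha : (p * (b * H / p) + a * H % p : ℤ) = a * H := mod_cast h ▸ Nat.div_add_mod (a * H) p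
  have hb : (p * (b * H / p) + b * H % p : ℤ) = b * H := mod_cast Nat.div_add_mod (b * H) p
  have hp' : (0 : ℤ) < p := mod_cast hp
  rw [← Nat.abs_cast H, ← abs_mul, sub_mul, abs_lt]
  have := Int.emod_nonneg (a * H) hp'.ne'
  have := Int.emod_nonneg (b * H) hp'.ne'
  have := Int.emod_lt_of_pos (a * H) hp'
  have := Int.emod_lt_of_pos (b * H) hp'
  constructor <;> linarith

lemma card_le_card_mul_prod_of_small_mem {G : Type*} [AddCommGroup G] [Fintype G] {p : ℕ}
    [NeZero p] {ι : Type*} [Fintype ι] (χ : ι → G →+ ZMod p) {H : ι → ℕ} (hH : ∀ i, H i ≠ 0)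
    {B : Finset G} (hB : ∀ u, (∀ i, ∃ r : ℤ, |r| * H i < p ∧ (r : ZMod p) = χ i u) → u ∈ B) :
    Fintype.card G ≤ #B * ∏ i, H i := by
  classical
  have hp : 0 < p := NeZero.pos p
  let box (u : G) (i : ι) : Fin (H i) := ⟨(χ i u).val * H i / p, by
    rw [Nat.div_lt_iff_lt_mul hp, mul_comm]
    exact Nat.mul_lt_mul_of_pos_left (ZMod.val_lt _) (Nat.pos_of_ne_zero (hH i))⟩
  have box_card : ∀ β ∈ (univ : Finset (∀ i, Fin (H i))), #{u | box u = β} ≤ #B := fun β _ ↦ by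
    rcases (univ.filter fun u ↦ box u = β).eq_empty_or_nonempty with hβ | ⟨u₀, hu₀⟩
    · simp [hβ]
    refine card_le_card_of_injOn (· - u₀) (fun u hu ↦ hB _ fun i ↦ ?_)
      sub_left_injective.injOn
    have same_box : box u = box u₀ := (mem_filter.1 hu).2.trans (mem_filter.1 hu₀).2.symm
    exact ⟨(χ i u).val - (χ i u₀).val,
      abs_sub_mul_lt_of_mul_div_eq hp (congrArg Fin.val (congrFun same_box i)), by simp⟩
  have := card_le_mul_card_image_of_maps_to (s := univ) (f := box) (fun _ _ ↦ mem_univ _) _ box_card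
  simpa [card_univ, Fintype.card_pi] using this

end Pigeonhole

section Rounding

variable {F : Type u} [Field F] [Fintype F] {R Q : Type*} [Ring R] [AddCommGroup Q] [Module R Q]

open scoped Classical in
/-- `f` rounds the elements of `B ⊆ F` to the finite model `Q`: it maps solutions of
`x - y = t (z - y)` in `B` to solutions of `p (x - y) = q (z - y)`, its fibres have at most
`κ` times the size `|F| / |Q|`, and `B` has density at least `1 / K` in `F`. -/
structure IsRounding (t : F) (p q : R) (B : Finset F) (f : F → Q) (κ K : ℕ) : Prop where
  smul_sub_eq : ∀ x ∈ B, ∀ y ∈ B, ∀ z ∈ B, x - y = t * (z - y) →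
    p • (f x - f y) = q • (f z - f y)
  card_fiber_le : ∀ y ∈ B, #{z ∈ B | f z = f y} * Nat.card Q ≤ κ * Fintype.card F
  card_le : Fintype.card F ≤ #B * K

namespace IsRounding

variable {t : F} {p q : R} {B : Finset F} {f : F → Q} {κ K m : ℕ}

open scoped Classical in
lemma card_solutions_le [Finite Q] (h : IsRounding t p q B f κ K) {C : Finset (Fin m → Q)}
    (hC : IsCap p q C) (g : Fin m → Q) :
    (#(solutions t {x ∈ Fintype.piFinset fun _ ↦ B | (fun i ↦ f (x i)) + g ∈ C}) : ℝ)
      ≤ (κ / Nat.card Q) ^ m * #{x ∈ Fintype.piFinset fun _ ↦ B | (fun i ↦ f (x i)) + g ∈ C}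
        * (Fintype.card F) ^ m := by
  set S : Finset (Fin m → F) := {x ∈ Fintype.piFinset fun _ ↦ B | (fun i ↦ f (x i)) + g ∈ C}
  have mem_S {x : Fin m → F} : x ∈ S ↔ (∀ i, x i ∈ B) ∧ (fun i ↦ f (x i)) + g ∈ C := by
    simp only [S, mem_filter, Fintype.mem_piFinset]
  have same_fiber : ∀ yz ∈ solutions t S, ∀ i, f (yz.2 i) = f (yz.1 i) := fun yz hyz i ↦ by
    obtain ⟨hy, hz, hx⟩ := mem_solutions.1 hyz
    rw [mem_S] at hy hz hx
    have := hC _ hx.2 _ hy.2 _ hz.2 <| funext fun i ↦ by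
      simpa using h.smul_sub_eq _ (hx.1 i) _ (hy.1 i) _ (hz.1 i) (by simp)
    exact add_right_cancel (congrFun this.2 i)
  have fiber_card : ∀ y ∈ S, (#{yz ∈ solutions t S | yz.1 = y} : ℝ)
      ≤ (κ / Nat.card Q * Fintype.card F) ^ m := fun y hy ↦ by
    have card_le : #{yz ∈ solutions t S | yz.1 = y}
        ≤ #(Fintype.piFinset fun i ↦ {z ∈ B | f z = f (y i)}) := by
      refine card_le_card_of_injOn Prod.snd (fun yz hyz ↦ ?_) fun yz hyz yz' hyz' heq ↦
        Prod.ext ((mem_filter.1 hyz).2.trans (mem_filter.1 hyz').2.symm) heq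
      obtain ⟨hsol, rfl⟩ := mem_filter.1 hyz
      exact Fintype.mem_piFinset.2 fun i ↦ mem_filter.2
        ⟨(mem_S.1 (mem_solutions.1 hsol).2.1).1 i, same_fiber yz hsol i⟩
    refine (Nat.cast_le.2 card_le).trans ?_
    rw [Fintype.card_piFinset, Nat.cast_prod, ← Fin.prod_const]
    refine prod_le_prod (fun _ _ ↦ by positivity) fun i _ ↦ ?_
    rw [div_mul_eq_mul_div, le_div_iff₀ (Nat.cast_pos.2 Nat.card_pos)]
    exact_mod_cast h.card_fiber_le (y i) ((mem_S.1 hy).1 i)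
  have maps_to : Set.MapsTo Prod.fst (solutions t S : Set ((Fin m → F) × (Fin m → F))) S :=
    fun yz hyz ↦ (mem_solutions.1 hyz).1
  rw [card_eq_sum_card_fiberwise maps_to, Nat.cast_sum]
  refine (sum_le_card_nsmul _ _ _ fiber_card).trans_eq ?_
  rw [nsmul_eq_mul, mul_pow]
  ring

lemma exists_isSparse [Finite Q] (h : IsRounding t p q B f κ K) (hK : K ≠ 0)
    {C : Finset (Fin m → Q)} (hC : IsCap p q C) :
    ∃ S : Finset (Fin m → F),
      IsSparse t (#C / (K * Nat.card Q : ℝ) ^ m) ((κ / Nat.card Q : ℝ) ^ m) S := by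
  classical
  have := Fintype.ofFinite Q
  have : (0 : ℝ) < K := Nat.cast_pos.2 (Nat.pos_of_ne_zero hK)
  have hQ : (0 : ℝ) < Nat.card Q := Nat.cast_pos.2 Nat.card_pos
  obtain ⟨g, hg⟩ := exists_card_mul_card_le_filter_add_mem
    (Fintype.piFinset fun _ : Fin m ↦ B) (fun x i ↦ f (x i)) C
  set S : Finset (Fin m → F) := {x ∈ Fintype.piFinset fun _ ↦ B | (fun i ↦ f (x i)) + g ∈ C} with hS
  refine ⟨S, ?_, by simpa [hS] using h.card_solutions_le hC g⟩
  have dense : (Fintype.card F : ℝ) ≤ #B * K := mod_cast h.card_le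
  rw [Fintype.card_piFinset_const, Fintype.card_pi_const, ← Nat.card_eq_fintype_card] at hg
  rw [Fintype.card_pi_const, div_mul_eq_mul_div, div_le_iff₀ (by positivity)]
  push_cast
  calc (#C : ℝ) * (Fintype.card F : ℝ) ^ m ≤ #C * (#B * K) ^ m := by gcongr
    _ = (#B ^ m * #C : ℕ) * K ^ m := by push_cast; ring
    _ ≤ (#S * Nat.card Q ^ m : ℕ) * K ^ m :=
      mul_le_mul_of_nonneg_right (Nat.cast_le.2 (by convert hg)) (by positivity)
    _ = #S * (K * Nat.card Q) ^ m := by push_cast; ring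

end IsRounding

lemma div_pow_lt_of_pow_lt {c k m r κ K : ℕ} (hk : k ≠ 0) (hK : K ≠ 0)
    (hc : k ^ (2 * m * r + 1) ≤ c ^ (3 * r)) (hlt : (κ * K ^ 3) ^ (m * r) < k) :
    (κ / k : ℝ) ^ m < (c / (K * k : ℝ) ^ m) ^ 3 := by
  have : (0 : ℝ) < k := Nat.cast_pos.2 (Nat.pos_of_ne_zero hk)
  have : (0 : ℝ) < K := Nat.cast_pos.2 (Nat.pos_of_ne_zero hK)
  have root : κ ^ m * (K ^ 3) ^ m * k ^ (2 * m) < c ^ 3 := by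
    refine lt_of_pow_lt_pow_left₀ r (by positivity) ?_
    calc (κ ^ m * (K ^ 3) ^ m * k ^ (2 * m)) ^ r = (κ * K ^ 3) ^ (m * r) * k ^ (2 * m * r) := by
          ring
      _ < k * k ^ (2 * m * r) := by gcongr
      _ = k ^ (2 * m * r + 1) := by ring
      _ ≤ c ^ (3 * r) := hc
      _ = (c ^ 3) ^ r := pow_mul _ _ _
  have root' : (κ ^ m * (K ^ 3) ^ m * k ^ (2 * m) : ℝ) < c ^ 3 := mod_cast root
  rw [div_pow, div_pow, div_lt_div_iff₀ (by positivity) (by positivity)]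
  calc (κ ^ m * ((K * k) ^ m) ^ 3 : ℝ) = κ ^ m * (K ^ 3) ^ m * k ^ (2 * m) * k ^ m := by
        rw [← pow_mul, mul_pow]
        ring
    _ < c ^ 3 * k ^ m := by gcongr

lemma HasPowerCap.exists_hasCaroWeiBound [Finite Q] {p q : R} {m r κ K : ℕ}
    (hQ : HasPowerCap p q m r Q) (hκ : κ ≠ 0) (hK : K ≠ 0)
    (hlt : (κ * K ^ 3) ^ (m * r) < Nat.card Q) :
    ∃ C : ℝ, 0 < C ∧ ∀ (F : Type u) [Field F] [Fintype F] (t : F) (B : Finset F) (f : F → Q),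
      IsRounding t p q B f κ K → HasCaroWeiBound.{u, v} F t C := by
  obtain ⟨D, hD, hcard⟩ := hQ
  have hQ0 : Nat.card Q ≠ 0 := Nat.card_pos.ne'
  have hβη := div_pow_lt_of_pow_lt hQ0 hK hcard hlt
  have hβ : 0 < (κ / Nat.card Q : ℝ) ^ m := by positivity
  have hη : 0 < #D / (K * Nat.card Q : ℝ) ^ m :=
    lt_of_pow_lt_pow_left₀ 3 (by positivity) (by simpa using hβ.trans hβη)
  obtain ⟨C, hC, hbound⟩ := exists_hasCaroWeiBound_of_isSparse.{u, v} hη hβ hβη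
  refine ⟨C, hC, fun F _ _ t B f hf ↦ ?_⟩
  obtain ⟨S, hS⟩ := hf.exists_isSparse hK hD
  exact hbound F t _ S hS

end Rounding

section RecurrentSequences

lemma finite_quotient_of_C_mem_of_monic_mem {J : Ideal ℤ[X]} {a : ℤ} (ha : a ≠ 0) (haJ : C a ∈ J)
    {g : ℤ[X]} (hg : g.Monic) (hgJ : g ∈ J) : Finite (ℤ[X] ⧸ J) := by
  have := hg.finite_quotient
  have span_le : Ideal.span {g} ≤ J := (Ideal.span_singleton_le_iff_mem J).2 hgJ
  have : Module.Finite ℤ (ℤ[X] ⧸ J) :=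
    .of_surjective (Ideal.Quotient.factor span_le).toAddMonoidHom.toIntLinearMap
      (Ideal.Quotient.factor_surjective span_le)
  refine Module.finite_of_fg_torsion _ fun x ↦ ⟨⟨a, mem_nonZeroDivisors_of_ne_zero ha⟩, ?_⟩
  obtain ⟨f, rfl⟩ := Ideal.Quotient.mk_surjective x
  change a • Ideal.Quotient.mk J f = 0
  rw [← map_zsmul, Ideal.Quotient.eq_zero_iff_mem, zsmul_eq_mul]
  exact J.mul_mem_right f haJ

lemma dvd_of_C_mem {I : Ideal ℤ[X]} (hI : I ≠ ⊤) {ℓ : ℕ} (hℓ : ℓ.Prime) (hℓI : C (ℓ : ℤ) ∈ I)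
    {a : ℤ} (ha : C a ∈ I) : (ℓ : ℤ) ∣ a := by
  by_contra hdvd
  obtain ⟨u, v, huv⟩ := (Nat.prime_iff_prime_int.1 hℓ).coprime_iff_not_dvd.2 hdvd
  refine hI ((Ideal.eq_top_iff_one I).2 ?_)
  rw [← C_1, ← huv, C_add, C_mul, C_mul]
  exact I.add_mem (I.mul_mem_left _ hℓI) (I.mul_mem_left _ ha)

lemma X_sub_C_notMem {I : Ideal ℤ[X]} (hI : I ≠ ⊤) {ℓ : ℕ} (hℓ : ℓ.Prime) (hℓI : C (ℓ : ℤ) ∈ I)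
    {g : ℤ[X]} (hgI : g ∈ I) {a : ℤ} (ha : ¬ (ℓ : ℤ) ∣ g.eval a) : X - C a ∉ I := fun h ↦
  ha <| dvd_of_C_mem hI hℓ hℓI <| by
    simpa using I.sub_mem hgI (I.mem_of_dvd (X_sub_C_dvd_sub_C_eval (p := g)) h)

lemma aeval_funLeft_succ_apply {R A : Type*} [CommRing R] [AddCommGroup A] [Module R A] (G : R[X])
    (s : ℕ → A) (n : ℕ) : aeval (LinearMap.funLeft R A Nat.succ) G s n
      = ∑ i ∈ range (G.natDegree + 1), G.coeff i • s (n + i) := by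
  have pow_apply (i : ℕ) (s : ℕ → A) :
      (LinearMap.funLeft R A Nat.succ ^ i) s n = s (n + i) := by
    induction i generalizing s with
    | zero => rfl
    | succ i ih => rw [pow_succ, Module.End.mul_apply, ih]; rfl
  simp [aeval_eq_sum_range, LinearMap.sum_apply, Finset.sum_apply, pow_apply]

/-- The sequences in `ZMod M` obeying the linear recurrence with characteristic polynomial `G`,
as a module over `ℤ[X]` on which `X` acts as the shift. -/
abbrev RecurrentSeq (G : ℤ[X]) (M : ℕ) : Type :=
  Submodule.torsionBy ℤ[X] (Module.AEval' (LinearMap.funLeft ℤ (ZMod M) Nat.succ)) G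

namespace RecurrentSeq

variable {G : ℤ[X]} {M : ℕ}

/-- The underlying sequence of an element of `RecurrentSeq G M`. -/
noncomputable def term : RecurrentSeq G M →+ ℕ → ZMod M :=
  (Module.AEval'.of _).symm.toLinearMap.toAddMonoidHom.comp
    (Submodule.torsionBy ℤ[X] _ G).subtype.toAddMonoidHom

lemma term_injective : Function.Injective (term (G := G) (M := M)) :=
  fun _ _ h ↦ Subtype.ext ((Module.AEval'.of _).symm.injective h)

lemma term_X_smul (a : RecurrentSeq G M) (n : ℕ) : term ((X : ℤ[X]) • a) n = term a (n + 1) := by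
  obtain ⟨s, hs⟩ := (Module.AEval'.of (LinearMap.funLeft ℤ (ZMod M) Nat.succ)).surjective a
  simp [term, ← hs, Module.AEval'.X_smul_of, LinearMap.funLeft_apply]

lemma term_C_smul (N : ℤ) (a : RecurrentSeq G M) : term (C N • a) = N • term a := by
  rw [← map_zsmul, eq_intCast C N, Int.cast_smul_eq_zsmul ℤ[X] N a]

/-- The linear recurrence over `ZMod M` with characteristic polynomial `G`. -/
def recurrence (G : ℤ[X]) (M : ℕ) : LinearRecurrence (ZMod M) :=
  ⟨G.natDegree, fun i ↦ -G.coeff i⟩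

lemma isSolution_iff (hG : G.Monic) {s : ℕ → ZMod M} :
    (recurrence G M).IsSolution s ↔ ∃ a : RecurrentSeq G M, term a = s := by
  let of := Module.AEval'.of (LinearMap.funLeft ℤ (ZMod M) Nat.succ)
  have mem_iff : of s ∈ Submodule.torsionBy ℤ[X] _ G ↔ (recurrence G M).IsSolution s := by
    rw [Submodule.mem_torsionBy_iff, ← Module.AEval.of_aeval_smul, LinearEquiv.map_eq_zero_iff,
      funext_iff]
    refine forall_congr' fun n ↦ ?_
    rw [Module.End.smul_def, aeval_funLeft_succ_apply, sum_range_succ, hG.coeff_natDegree,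
      ← Fin.sum_univ_eq_sum_range fun i ↦ G.coeff i • s (n + i), add_comm, Pi.zero_apply,
      add_eq_zero_iff_eq_neg]
    simp [recurrence]
    rfl
  rw [← mem_iff]
  refine ⟨fun h ↦ ⟨⟨of s, h⟩, of.symm_apply_apply s⟩, ?_⟩
  rintro ⟨a, rfl⟩
  simp [of, term]

lemma ext_of_lt (hG : G.Monic) {a b : RecurrentSeq G M}
    (h : ∀ i < G.natDegree, term a i = term b i) : a = b :=
  term_injective <| ((recurrence G M).eq_iff_eqOn_range_order _ _
    ((isSolution_iff hG).2 ⟨a, rfl⟩) ((isSolution_iff hG).2 ⟨b, rfl⟩)).2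
      fun i hi ↦ h i (mem_range.1 hi)

lemma exists_term_eq (hG : G.Monic) {v : ℕ → ZMod M}
    (hv : v G.natDegree = -∑ j ∈ range G.natDegree, G.coeff j * v j) :
    ∃ a : RecurrentSeq G M, ∀ i ≤ G.natDegree, term a i = v i := by
  let s := (recurrence G M).mkSol fun i ↦ v i
  have sol : (recurrence G M).IsSolution s := (recurrence G M).is_sol_mkSol _
  have init (i : Fin G.natDegree) : s i = v i := (recurrence G M).mkSol_eq_init _ i
  obtain ⟨a, ha⟩ := (isSolution_iff hG).1 sol
  refine ⟨a, fun i hi ↦ (congrFun ha i).trans ?_⟩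
  rcases hi.lt_or_eq with hi | rfl
  · exact init ⟨i, hi⟩
  · have := sol 0
    simp only [recurrence, zero_add, init, neg_mul, sum_neg_distrib] at this
    rw [this, hv, ← Fin.sum_univ_eq_sum_range fun j ↦ (G.coeff j : ZMod M) * v j]
    rfl

lemma card_eq (hG : G.Monic) : Nat.card (RecurrentSeq G M) = M ^ G.natDegree := by
  have bijective : Function.Bijective fun (a : RecurrentSeq G M) (i : Fin G.natDegree) ↦ term a i :=
    ⟨fun a b hab ↦ ext_of_lt hG fun i hi ↦ congrFun hab ⟨i, hi⟩, fun w ↦ by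
      obtain ⟨a, ha⟩ := (isSolution_iff hG).1 ((recurrence G M).is_sol_mkSol w)
      exact ⟨a, _root_.funext fun i ↦ (congrFun ha i).trans ((recurrence G M).mkSol_eq_init w i)⟩⟩
  rw [Nat.card_eq_of_bijective _ bijective, Nat.card_fun, Nat.card_zmod, Nat.card_fin]

lemma finite (hG : G.Monic) (hM : M ≠ 0) : Finite (RecurrentSeq G M) :=
  Nat.finite_of_card_ne_zero (card_eq hG ▸ pow_ne_zero _ hM)

lemma span_le_radical_annihilator (g : ℤ[X]) (ℓ j k : ℕ) :
    Ideal.span {C (ℓ : ℤ), g} ≤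
      (Module.annihilator ℤ[X] (RecurrentSeq (g ^ j) (ℓ ^ k))).radical := by
  refine Ideal.span_le.2 (Set.insert_subset ⟨k, ?_⟩ (Set.singleton_subset_iff.2 ⟨j, ?_⟩))
  · refine Module.mem_annihilator.2 fun a ↦ term_injective ?_
    rw [← C_pow, term_C_smul, map_zero]
    have : (ℓ : ZMod (ℓ ^ k)) ^ k = 0 := by rw [← Nat.cast_pow, ZMod.natCast_self]
    ext n
    simp [this]
  · exact Module.mem_annihilator.2 fun a ↦ Submodule.smul_torsionBy _ a

lemma exists_forall_hasPowerCap {ℓ : ℕ} (hℓ : ℓ.Prime) {g : ℤ[X]} (hg : g.Monic) {N : ℤ}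
    (hN : ¬ (ℓ : ℤ) ∣ N) (hg0 : ¬ (ℓ : ℤ) ∣ g.eval 0) (hgN : ¬ (ℓ : ℤ) ∣ g.eval N) :
    ∃ m r, ∀ j k, HasPowerCap (C N) X m r (RecurrentSeq (g ^ j) (ℓ ^ k)) := by
  let J : Ideal ℤ[X] := .span {C (ℓ : ℤ), g}
  have hℓJ : C (ℓ : ℤ) ∈ J := Ideal.subset_span (by simp)
  have hgJ : g ∈ J := Ideal.subset_span (by simp)
  have := finite_quotient_of_C_mem_of_monic_mem (Nat.cast_ne_zero.2 hℓ.ne_zero) hℓJ hg hgJ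
  obtain ⟨m, r, hcap⟩ := _root_.exists_forall_hasPowerCap (p := C N) (q := X) J
    fun I hI hJI ↦ ⟨fun h ↦ hN (dvd_of_C_mem hI.ne_top hℓ (hJI hℓJ) h),
      by simpa using X_sub_C_notMem hI.ne_top hℓ (hJI hℓJ) (hJI hgJ) hg0,
      X_sub_C_notMem hI.ne_top hℓ (hJI hℓJ) (hJI hgJ) hgN⟩
  refine ⟨m, r, fun j k ↦ ?_⟩
  have := finite (hg.pow j) (pow_ne_zero k hℓ.ne_zero)
  exact hcap _ (span_le_radical_annihilator g ℓ j k)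

end RecurrentSeq

end RecurrentSequences

section BohrSets

/-- The `ℓ¹` norm of the coefficient vector of an integer polynomial. -/
def coeffNorm (G : ℤ[X]) : ℕ :=
  ∑ i ∈ range (G.natDegree + 1), (G.coeff i).natAbs

lemma coeffNorm_of_monic {G : ℤ[X]} (hG : G.Monic) :
    (coeffNorm G : ℤ) = ∑ i ∈ range G.natDegree, |G.coeff i| + 1 := by
  simp [coeffNorm, sum_range_succ, hG.coeff_natDegree]

section Digits

variable {F : Type*} [CommRing F] {p : ℕ} {χ : F →+ ZMod p} {s u : F} {G : ℤ[X]} {M H : ℕ}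

open scoped Classical in
/-- The Bohr set of those `u` for which the phases `χ (s ^ i * u)`, `i < deg G`, lie close to
multiples of `p / M`, and the phase of `G(s) * u` is close to `0`. -/
noncomputable def bohrSet [Fintype F] (χ : F →+ ZMod p) (s : F) (G : ℤ[X]) (M H : ℕ) : Finset F :=
  univ.filter fun u ↦ (∀ i < G.natDegree, ∃ r : ℤ, |r| * H < p ∧ (r : ZMod p) = M * χ (s ^ i * u)) ∧
    ∃ r : ℤ, |r| * (H * M : ℕ) < p ∧ (r : ZMod p) = χ (aeval s G * u)

lemma mem_bohrSet [Fintype F] : u ∈ bohrSet χ s G M H ↔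
    (∀ i < G.natDegree, ∃ r : ℤ, |r| * H < p ∧ (r : ZMod p) = M * χ (s ^ i * u)) ∧
      ∃ r : ℤ, |r| * (H * M : ℕ) < p ∧ (r : ZMod p) = χ (aeval s G * u) := by
  simp [bohrSet]

/-- The phases `θ i / p` of `s ^ i * u` under `χ` are rounded to the fractions `l i / M`, with
errors `r i / (p * M)`, in such a way that the numerators `l` obey the recurrence of `G`. -/
structure IsDigitExpansion (χ : F →+ ZMod p) (s : F) (G : ℤ[X]) (M H : ℕ) (u : F)
    (θ r l : ℕ → ℤ) : Prop where
  cast_eq : ∀ i ≤ G.natDegree, (θ i : ZMod p) = χ (s ^ i * u)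
  mul_eq : ∀ i ≤ G.natDegree, M * θ i = p * l i + r i
  abs_mul_lt : ∀ i < G.natDegree, |r i| * H < p
  abs_mul_lt_mul : ∀ i ≤ G.natDegree, |r i| * H < p * coeffNorm G
  recurrence : l G.natDegree = -∑ j ∈ range G.natDegree, G.coeff j * l j

lemma abs_mul_sub_sum_mul_lt (hG : G.Monic) {r : ℕ → ℤ} (hr : ∀ i < G.natDegree, |r i| * H < p)
    {ρ : ℤ} (hρ : |ρ| * (H * M : ℕ) < p) :
    |M * ρ - ∑ j ∈ range G.natDegree, G.coeff j * r j| * H < p * coeffNorm G := calc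
  |M * ρ - ∑ j ∈ range G.natDegree, G.coeff j * r j| * H
    ≤ (M * |ρ| + ∑ j ∈ range G.natDegree, |G.coeff j| * |r j|) * H := by
      gcongr
      refine (abs_sub _ _).trans (add_le_add (by simp [abs_mul]) ?_)
      exact (abs_sum_le_sum_abs _ _).trans_eq (by simp_rw [abs_mul])
  _ = |ρ| * (H * M : ℕ) + ∑ j ∈ range G.natDegree, |G.coeff j| * (|r j| * H) := by
      push_cast
      simp_rw [← mul_assoc, ← sum_mul]
      ring
  _ < p + ∑ j ∈ range G.natDegree, |G.coeff j| * p := by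
      refine add_lt_add_of_lt_of_le hρ (sum_le_sum fun j hj ↦ ?_)
      exact mul_le_mul_of_nonneg_left (hr j (mem_range.1 hj)).le (abs_nonneg _)
  _ = p * coeffNorm G := by rw [coeffNorm_of_monic hG, ← sum_mul]; ring

lemma exists_isDigitExpansion [Fintype F] [NeZero p] (hG : G.Monic) (hu : u ∈ bohrSet χ s G M H) :
    ∃ θ r l, IsDigitExpansion χ s G M H u θ r l := by
  obtain ⟨hu, ρ, hρ, hρχ⟩ := mem_bohrSet.1 hu
  choose! r hr hrχ using hu
  let θ (i : ℕ) : ℤ := (χ (s ^ i * u)).val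
  have hθ (i : ℕ) : (θ i : ZMod p) = χ (s ^ i * u) := by simp [θ]
  have dvd : ∀ i < G.natDegree, ∃ l : ℤ, M * θ i - r i = p * l := fun i hi ↦
    (ZMod.intCast_zmod_eq_zero_iff_dvd _ _).1 (by push_cast; rw [hθ, hrχ i hi, sub_self])
  choose! l hl using dvd
  refine ⟨Function.update θ G.natDegree (ρ - ∑ j ∈ range G.natDegree, G.coeff j * θ j),
    Function.update r G.natDegree (M * ρ - ∑ j ∈ range G.natDegree, G.coeff j * r j),
    Function.update l G.natDegree (-∑ j ∈ range G.natDegree, G.coeff j * l j),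
    fun i hi ↦ ?_, fun i hi ↦ ?_, fun i hi ↦ ?_, fun i hi ↦ ?_, ?_⟩
  · rcases hi.lt_or_eq with hi | rfl
    · rw [Function.update_of_ne hi.ne, hθ]
    · have top : s ^ G.natDegree * u
          = aeval s G * u - ∑ j ∈ range G.natDegree, G.coeff j • (s ^ j * u) := by
        rw [aeval_eq_sum_range, sum_range_succ, hG.coeff_natDegree, one_smul, add_mul, sum_mul]
        simp [mul_assoc]
      rw [Function.update_self, top, map_sub, map_sum, ← hρχ]
      push_cast
      simp_rw [hθ, map_zsmul, zsmul_eq_mul]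
  · rcases hi.lt_or_eq with hi | rfl
    · simp only [Function.update_of_ne hi.ne]
      linarith [hl i hi]
    · have sum_eq : ∑ j ∈ range G.natDegree, G.coeff j * (M * θ j - r j)
          = ∑ j ∈ range G.natDegree, G.coeff j * (p * l j) :=
        sum_congr rfl fun j hj ↦ by rw [hl j (mem_range.1 hj)]
      simp only [mul_sub, sum_sub_distrib, mul_left_comm (G.coeff _), ← mul_sum] at sum_eq
      simp only [Function.update_self]
      linear_combination -sum_eq
  · simpa only [Function.update_of_ne hi.ne] using hr i hi
  · rcases hi.lt_or_eq with hi | rfl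
    · rw [Function.update_of_ne hi.ne]
      refine (hr i hi).trans_le (le_mul_of_one_le_right (by positivity) ?_)
      rw [coeffNorm_of_monic hG]
      exact le_add_of_nonneg_left (sum_nonneg fun _ _ ↦ abs_nonneg _)
    · simpa only [Function.update_self] using abs_mul_sub_sum_mul_lt hG hr hρ
  · rw [Function.update_self]
    exact congrArg _ <| sum_congr rfl fun j hj ↦ by
      rw [Function.update_of_ne (mem_range.1 hj).ne]

lemma abs_mul_sub_sub_sub_lt {a b c d N P w h : ℤ} (ha : |a| * h < P * w) (hb : |b| * h < P * w)
    (hc : |c| * h < P * w) (hd : |d| * h < P * w) (hh : 2 * (|N| + 1) * w ≤ h) (hP : 0 ≤ P)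
    (hh0 : 0 ≤ h) : |N * (a - b) - (c - d)| < P := by
  refine lt_of_mul_lt_mul_right ?_ hh0
  calc |N * (a - b) - (c - d)| * h
    _ ≤ (|N| * (|a| + |b|) + (|c| + |d|)) * h := by
      gcongr
      refine (abs_sub _ _).trans (add_le_add ?_ (abs_sub _ _))
      rw [abs_mul]
      exact mul_le_mul_of_nonneg_left (abs_sub _ _) (abs_nonneg N)
    _ = |N| * (|a| * h + |b| * h) + (|c| * h + |d| * h) := by ring
    _ < |N| * (P * w + P * w) + (P * w + P * w) :=
      add_lt_add_of_le_of_lt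
        (mul_le_mul_of_nonneg_left (add_le_add ha.le hb.le) (abs_nonneg N)) (add_lt_add hc hd)
    _ = P * (2 * (|N| + 1) * w) := by ring
    _ ≤ P * h := by gcongr

lemma IsDigitExpansion.cast_mul_sub_eq {x y z : F} {θx rx lx θy ry ly θz rz lz : ℕ → ℤ}
    (hx : IsDigitExpansion χ s G M H x θx rx lx) (hy : IsDigitExpansion χ s G M H y θy ry ly)
    (hz : IsDigitExpansion χ s G M H z θz rz lz) {N : ℤ}
    (hH : 2 * (|N| + 1) * coeffNorm G ≤ H) (hxyz : N * (x - y) = s * (z - y)) {i : ℕ}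
    (hi : i < G.natDegree) :
    (N * (lx i - ly i) : ZMod M) = lz (i + 1) - ly (i + 1) := by
  have phase : ((N * (θx i - θy i) - (θz (i + 1) - θy (i + 1)) : ℤ) : ZMod p) = 0 := by
    push_cast
    rw [hx.cast_eq i hi.le, hy.cast_eq i hi.le, hz.cast_eq (i + 1) hi, hy.cast_eq (i + 1) hi,
      ← map_sub, ← map_sub, ← zsmul_eq_mul, ← map_zsmul, ← map_sub]
    convert map_zero χ using 2
    rw [zsmul_eq_mul]
    linear_combination s ^ i * hxyz
  obtain ⟨e, he⟩ := (ZMod.intCast_zmod_eq_zero_iff_dvd _ _).1 phase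
  have error_eq : N * (rx i - ry i) - (rz (i + 1) - ry (i + 1))
      = p * (M * e - (N * (lx i - ly i) - (lz (i + 1) - ly (i + 1)))) := by
    linear_combination (M : ℤ) * he - N * hx.mul_eq i hi.le + N * hy.mul_eq i hi.le
      + hz.mul_eq _ hi - hy.mul_eq _ hi
  have error_lt : |N * (rx i - ry i) - (rz (i + 1) - ry (i + 1))| < p :=
    abs_mul_sub_sub_sub_lt (hx.abs_mul_lt_mul i hi.le) (hy.abs_mul_lt_mul i hi.le)
      (hz.abs_mul_lt_mul _ hi) (hy.abs_mul_lt_mul _ hi) hH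
      (Nat.cast_nonneg p) (Nat.cast_nonneg H)
  have hp : (p : ℤ) ≠ 0 := ((abs_nonneg _).trans_lt error_lt).ne'
  have error_eq_zero := Int.eq_zero_of_abs_lt_dvd ⟨_, error_eq⟩ error_lt
  have digits_eq := (mul_eq_zero.1 (error_eq.symm.trans error_eq_zero)).resolve_left hp
  have := congrArg (Int.cast : ℤ → ZMod M) digits_eq
  push_cast [ZMod.natCast_self] at this
  linear_combination -this

lemma IsDigitExpansion.exists_small_phase {y z : F} {θy ry ly θz rz lz : ℕ → ℤ}
    (hy : IsDigitExpansion χ s G M H y θy ry ly) (hz : IsDigitExpansion χ s G M H z θz rz lz)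
    (hH : H ≠ 0) (hD : 12 * G.natDegree ≤ H)
    (hl : ∀ i < G.natDegree, (lz i : ZMod M) = ly i) (c : Fin G.natDegree → Fin M) :
    ∃ r : ℤ, 6 * |r| ≤ p ∧ (r : ZMod p) = χ ((∑ i, ((c i : ℕ) : F) * s ^ (i : ℕ)) * (z - y)) := by
  have small (i : Fin G.natDegree) : ∃ w : ℤ, M * w = rz i - ry i ∧
      (w : ZMod p) = χ (s ^ (i : ℕ) * (z - y)) := by
    obtain ⟨k, hk⟩ := (ZMod.intCast_zmod_eq_zero_iff_dvd (lz i - ly i) M).1 (by simp [hl i i.2])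
    refine ⟨θz i - θy i - p * k, ?_, ?_⟩
    · linear_combination hz.mul_eq i i.2.le - hy.mul_eq i i.2.le + (p : ℤ) * hk
    · push_cast
      rw [hz.cast_eq i i.2.le, hy.cast_eq i i.2.le, ← map_sub, mul_sub]
      simp
  choose w hw hwχ using small
  have term_le (i : Fin G.natDegree) : |(c i : ℕ) * w i| * H ≤ 2 * p := calc
    |(c i : ℕ) * w i| * H ≤ M * |w i| * H := by
      rw [abs_mul, Nat.abs_cast]
      gcongr
      exact (c i).2.le
    _ = |rz i - ry i| * H := by rw [← hw, abs_mul, Nat.abs_cast]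
    _ ≤ (|rz i| + |ry i|) * H := by gcongr; exact abs_sub _ _
    _ ≤ 2 * p := by linarith [hz.abs_mul_lt i i.2, hy.abs_mul_lt i i.2]
  refine ⟨∑ i, (c i : ℕ) * w i, le_of_mul_le_mul_right ?_ (Nat.cast_pos.2 hH.bot_lt), ?_⟩
  · calc 6 * |∑ i, (c i : ℕ) * w i| * H
      _ ≤ 6 * ∑ i, |(c i : ℕ) * w i| * H := by
        rw [mul_assoc, ← sum_mul]
        gcongr
        exact abs_sum_le_sum_abs _ _
      _ ≤ 6 * ∑ _i : Fin G.natDegree, 2 * (p : ℤ) :=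
        mul_le_mul_of_nonneg_left (sum_le_sum fun i _ ↦ term_le i) (by norm_num)
      _ = p * (12 * G.natDegree : ℕ) := by simp; ring
      _ ≤ p * H := by gcongr
  · push_cast
    rw [sum_mul, map_sum]
    refine sum_congr rfl fun i _ ↦ ?_
    rw [hwχ, mul_assoc, ← nsmul_eq_mul, ← nsmul_eq_mul, map_nsmul]

end Digits

variable {F : Type*} [Field F] [Fintype F] {p : ℕ} [NeZero p] {χ : F →+ ZMod p} {G : ℤ[X]}
  {M H K : ℕ}

lemma exists_isRounding (hχ : χ ≠ 0) {t : F} {N : ℤ} (hG : G.Monic)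
    (hH : 2 * (|N| + 1) * coeffNorm G ≤ H) (hD : 12 * G.natDegree ≤ H)
    (hdigits : Function.Injective fun c : Fin G.natDegree → Fin M ↦
      ∑ i, ((c i : ℕ) : F) * (N * t) ^ (i : ℕ))
    (hK : Fintype.card F ≤ #(bohrSet χ (N * t) G M H) * K) :
    ∃ f : F → RecurrentSeq G M, IsRounding t (C N) X (bohrSet χ (N * t) G M H) f 4 K := by
  classical
  choose! θ r l hl using fun u (hu : u ∈ bohrSet χ (N * t) G M H) ↦ exists_isDigitExpansion hG hu
  choose! f hf using fun u hu ↦ RecurrentSeq.exists_term_eq (M := M) hG (v := fun i ↦ l u i)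
    (mod_cast congrArg (Int.cast : ℤ → ZMod M) (hl u hu).recurrence)
  have hH0 : H ≠ 0 := by
    rintro rfl
    have := coeffNorm_of_monic hG
    have := sum_nonneg fun i (_ : i ∈ range G.natDegree) ↦ abs_nonneg (G.coeff i)
    push_cast at hH
    nlinarith [abs_nonneg N]
  refine ⟨f, fun x hx y hy z hz hxyz ↦ ?_, fun y hy ↦ ?_, hK⟩
  · refine RecurrentSeq.ext_of_lt hG fun i hi ↦ ?_
    rw [RecurrentSeq.term_C_smul, RecurrentSeq.term_X_smul, map_sub, map_sub, Pi.smul_apply,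
      Pi.sub_apply, Pi.sub_apply, hf x hx i hi.le, hf y hy i hi.le, hf z hz _ hi, hf y hy _ hi,
      zsmul_eq_mul]
    exact (hl x hx).cast_mul_sub_eq (hl y hy) (hl z hz) hH (by rw [hxyz, mul_assoc]) hi
  · have := card_mul_card_le_of_small_phase hχ
      (T := {z ∈ bohrSet χ (N * t) G M H | f z = f y}.image (· - y))
      (E := univ.image fun c : Fin G.natDegree → Fin M ↦ ∑ i, ((c i : ℕ) : F) * (N * t) ^ (i : ℕ))
      fun e he v hv ↦ by
        obtain ⟨c, -, rfl⟩ := mem_image.1 he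
        obtain ⟨z, hz, rfl⟩ := mem_image.1 hv
        obtain ⟨hz, hzy⟩ := mem_filter.1 hz
        refine (hl y hy).exists_small_phase (hl z hz) hH0 hD (fun i hi ↦ ?_) c
        rw [← hf z hz i hi.le, ← hf y hy i hi.le, hzy]
    rw [card_image_of_injective _ (sub_left_injective), card_image_of_injective _ hdigits] at this
    rw [RecurrentSeq.card_eq hG]
    rw [card_univ, Fintype.card_fun, Fintype.card_fin, Fintype.card_fin] at this
    convert this

lemma exists_addMonoidHom_ne_zero (F : Type*) [Field F] (p : ℕ) [Fact p.Prime] [CharP F p] :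
    ∃ χ : F →+ ZMod p, χ ≠ 0 := by
  let _ : Algebra (ZMod p) F := ZMod.algebra F p
  obtain ⟨f, hf⟩ := Module.Projective.exists_dual_eq_one (ZMod p) (one_ne_zero (α := F))
  exact ⟨f.toAddMonoidHom, fun h ↦ one_ne_zero (hf.symm.trans (DFunLike.congr_fun h 1))⟩

lemma card_le_card_bohrSet_mul (s : F) (hM : M ≠ 0) (hH : H ≠ 0) :
    Fintype.card F ≤ #(bohrSet χ s G M H) * (H * M * H ^ G.natDegree) := by
  have := card_le_card_mul_prod_of_small_mem (ι := Option (Fin G.natDegree))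
    (fun i ↦ i.elim (χ.comp (AddMonoidHom.mulLeft (aeval s G)))
      fun i ↦ M • χ.comp (AddMonoidHom.mulLeft (s ^ (i : ℕ))))
    (H := fun i ↦ i.elim (H * M) fun _ ↦ H) (by rintro (_ | _) <;> simp [hM, hH])
    (B := bohrSet χ s G M H) fun u hu ↦
      mem_bohrSet.2 ⟨fun i hi ↦ by simpa using hu (some ⟨i, hi⟩), by simpa using hu none⟩
  simpa [Fintype.prod_option] using this

lemma card_le_card_bohrSet_mul_of_aeval_eq_zero {s : F} (hs : aeval s G = 0) (hH : H ≠ 0) :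
    Fintype.card F ≤ #(bohrSet χ s G M H) * H ^ G.natDegree := by
  have := card_le_card_mul_prod_of_small_mem (ι := Fin G.natDegree)
    (fun i ↦ M • χ.comp (AddMonoidHom.mulLeft (s ^ (i : ℕ)))) (H := fun _ ↦ H) (fun _ ↦ hH)
    (B := bohrSet χ s G M H) fun u hu ↦
      mem_bohrSet.2 ⟨fun i hi ↦ by simpa using hu ⟨i, hi⟩, 0, by simp [hs, NeZero.pos p]⟩
  simpa using this

lemma card_le_card_bohrSet_char_mul (s : F) :
    Fintype.card F ≤ #(bohrSet χ s G p H) * p := by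
  have hp : (0 : ℤ) < p := mod_cast NeZero.pos p
  have := card_le_card_mul_prod_of_small_mem (ι := Unit)
    (fun _ ↦ χ.comp (AddMonoidHom.mulLeft (aeval s G))) (H := fun _ ↦ p) (fun _ ↦ NeZero.ne p)
    (B := bohrSet χ s G p H) fun u hu ↦ by
      obtain ⟨r, hr, hrχ⟩ := hu ()
      obtain rfl : r = 0 := Int.abs_lt_one_iff.1 (by nlinarith)
      exact mem_bohrSet.2 ⟨fun i _ ↦ ⟨0, by simpa using hp⟩, 0, by simpa using hp,
        by simpa using hrχ⟩
  simpa using this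

end BohrSets

section IntegerPolynomials

lemma exists_monic_mem {p : ℕ} (hp : p.Prime) {I : Ideal ℤ[X]} (hpI : C (p : ℤ) ∈ I) {f : ℤ[X]}
    (hf : f ∈ I) (hpf : ¬ C (p : ℤ) ∣ f) : ∃ g ∈ I, g.Monic := by
  have : Fact p.Prime := ⟨hp⟩
  have dvd_of_map_eq_zero {h : ℤ[X]} (hh : h.map (Int.castRingHom (ZMod p)) = 0) :
      C (p : ℤ) ∣ h := (C_dvd_iff_dvd_coeff _ _).2 fun i ↦
    (ZMod.intCast_zmod_eq_zero_iff_dvd _ p).1 (by simpa using congrArg (coeff · i) hh)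
  set f' := f.map (Int.castRingHom (ZMod p))
  obtain ⟨b, hb⟩ := ZMod.intCast_surjective f'.leadingCoeff⁻¹
  have map_eq : (f * C b).map (Int.castRingHom (ZMod p)) = f' * C f'.leadingCoeff⁻¹ := by
    rw [Polynomial.map_mul, map_C, eq_intCast, hb]
  obtain ⟨g, hg, -, g_monic⟩ := lifts_and_natDegree_eq_and_monic ((mem_lifts _).2 ⟨_, map_eq⟩)
    (monic_mul_leadingCoeff_inv fun h ↦ hpf (dvd_of_map_eq_zero h))
  have dvd : C (p : ℤ) ∣ g - f * C b :=
    dvd_of_map_eq_zero (by rw [Polynomial.map_sub, hg, map_eq, sub_self])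
  exact ⟨g, (Submodule.sub_mem_iff_left I (I.mul_mem_right _ hf)).1 (I.mem_of_dvd dvd hpI), g_monic⟩

lemma exists_prime_C_mem {I : Ideal ℤ[X]} [I.IsPrime] {a : ℤ} (ha : a ≠ 0) (haI : C a ∈ I) :
    ∃ p : ℕ, p.Prime ∧ C (p : ℤ) ∈ I := by
  let J := I.comap (C : ℤ →+* ℤ[X])
  have prime : Prime (Submodule.IsPrincipal.generator J) :=
    Submodule.IsPrincipal.prime_generator_of_isPrime J ((Submodule.ne_bot_iff J).2 ⟨a, haI, ha⟩)
  exact ⟨_, Int.prime_iff_natAbs_prime.1 prime,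
    J.mem_of_dvd (Int.dvd_natAbs_self) (Submodule.IsPrincipal.generator_mem J)⟩

lemma exists_prime_not_dvd {a : ℤ} (ha : a ≠ 0) : ∃ ℓ : ℕ, ℓ.Prime ∧ ¬ (ℓ : ℤ) ∣ a := by
  obtain ⟨ℓ, hlt, hℓ⟩ := Nat.exists_infinite_primes (a.natAbs + 1)
  exact ⟨ℓ, hℓ, fun h ↦ hlt.not_gt (Nat.lt_succ_of_le (Nat.le_of_dvd (Int.natAbs_pos.2 ha)
    (Int.natCast_dvd.1 h)))⟩

lemma eval_ne_zero_of_minimalFor {R : Type*} [CommRing R] [IsDomain R] {I : Ideal R[X]} [I.IsPrime]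
    {h : R[X]} (hh : MinimalFor (fun q ↦ q ∈ I ∧ q ≠ 0) natDegree h) {a : R} (ha : X - C a ∉ I) :
    h.eval a ≠ 0 := by
  intro root
  obtain ⟨q, rfl⟩ := dvd_iff_isRoot.2 root
  have hq : q ≠ 0 := right_ne_zero_of_mul hh.1.2
  have hqI : q ∈ I := (Ideal.IsPrime.mem_or_mem ‹_› hh.1.1).resolve_left ha
  have degree_mul := natDegree_mul (X_sub_C_ne_zero a) hq
  rw [natDegree_X_sub_C] at degree_mul
  have := hh.2 ⟨hqI, hq⟩
  lia

lemma eval_leadingCoeff_mul_integralNormalization_ne_zero {R : Type*} [CommRing R] [IsDomain R]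
    {h : R[X]} (hdeg : h.natDegree ≠ 0) {a : R} (ha : h.eval a ≠ 0) :
    h.integralNormalization.eval (h.leadingCoeff * a) ≠ 0 := by
  have := integralNormalization_eval₂_leadingCoeff_mul (Nat.one_le_iff_ne_zero.2 hdeg)
    (RingHom.id R) a
  simp only [RingHom.id_apply, eval₂_id] at this
  rw [this]
  exact mul_ne_zero (pow_ne_zero _ (leadingCoeff_ne_zero.2 fun h0 ↦ hdeg (by simp [h0]))) ha

-- The witness is the product of the values at `X` of all differences of two digit expansions.
lemma exists_notMem_forall_injective_digits {I : Ideal ℤ[X]} [I.IsPrime] {D M : ℕ} {N : ℤ}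
    (hI : ∀ q : ℤ[X], q ≠ 0 → q.degree < D → (∀ i, |q.coeff i| < M) → q.comp (C N * X) ∉ I) :
    ∃ f ∉ I, ∀ (F : Type u) [CommRing F] (t : F), aeval t f ≠ 0 →
      Function.Injective fun c : Fin D → Fin M ↦ ∑ i, ((c i : ℕ) : F) * (N * t) ^ (i : ℕ) := by
  classical
  let digitPoly (c : Fin D → Fin M) : ℤ[X] := ofFn D fun i ↦ ((c i : ℕ) : ℤ)
  have coeff_digitPoly (c : Fin D → Fin M) (i : ℕ) :
      (digitPoly c).coeff i = if h : i < D then ((c ⟨i, h⟩ : ℕ) : ℤ) else 0 := by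
    split_ifs with h
    · exact ofFn_coeff_eq_val_of_lt _ h
    · exact ofFn_coeff_eq_zero_of_ge _ (not_lt.1 h)
  have digitPoly_injective : Function.Injective digitPoly := fun c c' h ↦ _root_.funext fun i ↦
    Fin.ext (Nat.cast_injective (congrFun (injective_ofFn D h) i))
  have aeval_digitPoly (F : Type u) [CommRing F] (t : F) (c : Fin D → Fin M) :
      aeval t ((digitPoly c).comp (C N * X)) = ∑ i, ((c i : ℕ) : F) * (N * t) ^ (i : ℕ) := by
    simp [digitPoly, ofFn_eq_sum_monomial]
  refine ⟨∏ c ∈ univ.offDiag, (digitPoly c.1 - digitPoly c.2).comp (C N * X), ?_, ?_⟩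
  · rw [Ideal.IsPrime.prod_mem_iff]
    rintro ⟨⟨c, c'⟩, hc, hmem⟩
    have hne : c ≠ c' := (mem_offDiag.1 hc).2.2
    have hM : 0 < M := by
      obtain ⟨i, -⟩ := Function.ne_iff.1 hne
      exact (c i).pos
    refine hI _ (sub_ne_zero.2 (digitPoly_injective.ne hne))
      ((degree_sub_le _ _).trans_lt (max_lt (ofFn_degree_lt _) (ofFn_degree_lt _)))
      (fun i ↦ ?_) hmem
    rw [coeff_sub, coeff_digitPoly, coeff_digitPoly, abs_lt]
    split_ifs with h
    · have := (c ⟨i, h⟩).2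
      have := (c' ⟨i, h⟩).2
      lia
    · lia
  · intro F _ t ht c c' hcc
    by_contra hne
    rw [map_prod] at ht
    refine ht (prod_eq_zero (i := (c, c')) (by simp [hne]) ?_)
    rw [sub_comp, map_sub, aeval_digitPoly, aeval_digitPoly, sub_eq_zero]
    exact hcc

end IntegerPolynomials

section UniformBounds

/-- There is a Caro–Wei bound valid, with one and the same constant, for all the equations
`x = y + t • (z - y)` over finite fields whose parameter `t ≠ 0, 1` is a root of every polynomial
in `I`. -/
def HasUniformBound (I : Ideal ℤ[X]) : Prop :=
  ∃ C : ℝ, 0 < C ∧ ∀ (F : Type u) [Field F] [Finite F] (t : F), t ≠ 0 → t ≠ 1 →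
    I ≤ RingHom.ker (aeval t : ℤ[X] →ₐ[ℤ] F) → HasCaroWeiBound.{u, v} F t C

/-- The bound of `HasUniformBound I`, required only of the parameters `t` which are not roots of a
suitable polynomial outside `I`. -/
def HasGenericBound (I : Ideal ℤ[X]) : Prop :=
  ∃ f ∉ I, ∃ C : ℝ, 0 < C ∧ ∀ (F : Type u) [Field F] [Finite F] (t : F), t ≠ 0 → t ≠ 1 →
    I ≤ RingHom.ker (aeval t : ℤ[X] →ₐ[ℤ] F) → aeval t f ≠ 0 → HasCaroWeiBound.{u, v} F t C

lemma HasGenericBound.hasUniformBound {I : Ideal ℤ[X]} (hI : HasGenericBound.{u, v} I)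
    (ih : ∀ J, I < J → HasUniformBound.{u, v} J) : HasUniformBound.{u, v} I := by
  obtain ⟨f, hf, C, hC, hbound⟩ := hI
  obtain ⟨C', hC', hbound'⟩ := ih (I ⊔ .span {f}) (left_lt_sup.2 fun h ↦
    hf (h (Ideal.mem_span_singleton_self f)))
  refine ⟨min C C', lt_min hC hC', fun F _ _ t ht0 ht1 hIt ↦ ?_⟩
  by_cases hft : aeval t f = 0
  · exact (hbound' F t ht0 ht1 (sup_le hIt ((Ideal.span_singleton_le_iff_mem _).2 hft))).mono
      (min_le_right _ _)
  · exact (hbound F t ht0 ht1 hIt hft).mono (min_le_left _ _)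

lemma hasUniformBound_of_not_isPrime {I : Ideal ℤ[X]} (hI : ¬ I.IsPrime)
    (ih : ∀ J, I < J → HasUniformBound.{u, v} J) : HasUniformBound.{u, v} I := by
  rcases Ideal.not_isPrime_iff.1 hI with rfl | ⟨f, hf, g, hg, hfg⟩
  · exact ⟨1, one_pos, fun F _ _ t _ _ ht ↦ (RingHom.ker_ne_top _ (top_le_iff.1 ht)).elim⟩
  obtain ⟨C, hC, hbound⟩ := ih (I ⊔ .span {g}) (left_lt_sup.2 fun h ↦
    hg (h (Ideal.mem_span_singleton_self g)))
  refine HasGenericBound.hasUniformBound ⟨f, hf, C, hC, fun F _ _ t ht0 ht1 hIt hft ↦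
    hbound F t ht0 ht1 (sup_le hIt ((Ideal.span_singleton_le_iff_mem _).2 ?_))⟩ ih
  have := hIt hfg
  rw [RingHom.mem_ker, map_mul] at this
  exact (mul_eq_zero.1 this).resolve_left hft

/-- A width `H` for which the Bohr sets of `G` and `N * t` are narrow enough for
`exists_isRounding`. -/
def roundingScale (G : ℤ[X]) (N : ℤ) : ℕ :=
  2 * (N.natAbs + 1) * coeffNorm G + 12 * G.natDegree

lemma two_mul_mul_coeffNorm_le_roundingScale (G : ℤ[X]) (N : ℤ) :
    2 * (|N| + 1) * coeffNorm G ≤ roundingScale G N := by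
  simp [roundingScale]

lemma roundingScale_ne_zero {G : ℤ[X]} (hG : G.Monic) (N : ℤ) : roundingScale G N ≠ 0 := by
  have : 0 < coeffNorm G := by
    rw [← Int.natCast_pos, coeffNorm_of_monic hG]
    positivity
  rw [roundingScale]
  positivity

lemma hasGenericBound_of_bohrSet {I : Ideal ℤ[X]} [I.IsPrime] {G : ℤ[X]} (hG : G.Monic) {N : ℤ}
    {M K m r : ℕ} (hM : M ≠ 0) (hK : K ≠ 0) (hcap : HasPowerCap (C N) X m r (RecurrentSeq G M))
    (hlt : (4 * K ^ 3) ^ (m * r) < M ^ G.natDegree)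
    (hdigits : ∀ q : ℤ[X], q ≠ 0 → q.degree < G.natDegree → (∀ i, |q.coeff i| < M) →
      q.comp (C N * X) ∉ I)
    (hdense : ∀ (F : Type u) [Field F] [Fintype F] (t : F) (p : ℕ) [Fact p.Prime] [CharP F p]
      (χ : F →+ ZMod p), I ≤ RingHom.ker (aeval t : ℤ[X] →ₐ[ℤ] F) →
        Fintype.card F ≤ #(bohrSet χ (N * t) G M (roundingScale G N)) * K) :
    HasGenericBound.{u, v} I := by
  have := RecurrentSeq.finite hG hM
  obtain ⟨f, hf, hinj⟩ := exists_notMem_forall_injective_digits hdigits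
  obtain ⟨c, hc, hbound⟩ := hcap.exists_hasCaroWeiBound four_ne_zero hK
    (by rwa [RecurrentSeq.card_eq hG])
  refine ⟨f, hf, c, hc, fun F _ _ t _ _ hIt hft ↦ ?_⟩
  have := Fintype.ofFinite F
  obtain ⟨p, _⟩ := CharP.exists F
  have : Fact p.Prime :=
    ⟨(CharP.char_is_prime_or_zero F p).resolve_right (CharP.char_ne_zero_of_finite F p)⟩
  obtain ⟨χ, hχ⟩ := exists_addMonoidHom_ne_zero F p
  obtain ⟨φ, hφ⟩ := exists_isRounding hχ hG (two_mul_mul_coeffNorm_le_roundingScale G N)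
    (Nat.le_add_left _ _) (hinj F t hft) (hdense F t p χ hIt)
  exact hbound F t _ φ hφ

lemma four_mul_pow_lt {A B m r k d : ℕ} (hA : (4 * A ^ 3) ^ (m * r) ≤ k) (hB : 1 < B)
    (hd : 3 * (m * r) < d) : (4 * (A * B ^ k) ^ 3) ^ (m * r) < (B ^ k) ^ d := calc
  (4 * (A * B ^ k) ^ 3) ^ (m * r) = (4 * A ^ 3) ^ (m * r) * (B ^ k) ^ (3 * (m * r)) := by ring
  _ < B ^ k * (B ^ k) ^ (3 * (m * r)) := by
    gcongr
    exact hA.trans_lt (Nat.lt_pow_self hB)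
  _ = (B ^ k) ^ (3 * (m * r) + 1) := (pow_succ' _ _).symm
  _ ≤ (B ^ k) ^ d := Nat.pow_le_pow_right (by positivity) hd

-- This polynomial takes the value `1` at both `0` and `1`, so that the corresponding sequences
-- modulo a power of a prime have large caps whatever the prime is.
lemma monic_X_sq_sub_X_add_one : (X ^ 2 - X + 1 : ℤ[X]).Monic := by monicity!

lemma natDegree_X_sq_sub_X_add_one_pow (j : ℕ) :
    ((X ^ 2 - X + 1 : ℤ[X]) ^ j).natDegree = 2 * j := by
  have : (X ^ 2 - X + 1 : ℤ[X]).natDegree = 2 := by compute_degree!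
  rw [monic_X_sq_sub_X_add_one.natDegree_pow, this, mul_comm]

lemma exists_hasPowerCap_X_sq_sub_X_add_one_pow {ℓ : ℕ} (hℓ : ℓ.Prime) :
    ∃ m r, ∀ j k, HasPowerCap (C (1 : ℤ)) X m r (RecurrentSeq ((X ^ 2 - X + 1) ^ j) (ℓ ^ k)) := by
  have : ¬ (ℓ : ℤ) ∣ 1 := (Nat.prime_iff_prime_int.1 hℓ).not_dvd_one
  exact RecurrentSeq.exists_forall_hasPowerCap hℓ monic_X_sq_sub_X_add_one this (by simpa)
    (by simpa)

lemma hasGenericBound_bot : HasGenericBound.{u, v} ⊥ := by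
  obtain ⟨m, r, hcap⟩ := exists_hasPowerCap_X_sq_sub_X_add_one_pow Nat.prime_two
  set G : ℤ[X] := (X ^ 2 - X + 1) ^ (3 * (m * r) + 1)
  have hG : G.Monic := monic_X_sq_sub_X_add_one.pow _
  set H := roundingScale G 1
  have hH : H ≠ 0 := roundingScale_ne_zero hG 1
  set k := (4 * (H * H ^ G.natDegree) ^ 3) ^ (m * r)
  refine hasGenericBound_of_bohrSet hG (M := 2 ^ k) (K := H * H ^ G.natDegree * 2 ^ k)
    (by positivity) (by positivity) (hcap _ _) (four_mul_pow_lt le_rfl one_lt_two ?_)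
    (fun q hq _ _ ↦ by simpa using hq) ?_
  · rw [natDegree_X_sq_sub_X_add_one_pow]
    lia
  · intro F _ _ t p _ _ χ _
    rw [mul_right_comm]
    exact card_le_card_bohrSet_mul _ (by positivity) hH

lemma hasGenericBound_of_prime {I : Ideal ℤ[X]} [I.IsPrime] {p : ℕ} (hp : p.Prime)
    (hpI : C (p : ℤ) ∈ I) (hI : ∀ f ∈ I, C (p : ℤ) ∣ f) : HasGenericBound.{u, v} I := by
  have : NeZero p := ⟨hp.ne_zero⟩
  obtain ⟨m, r, hcap⟩ := exists_hasPowerCap_X_sq_sub_X_add_one_pow hp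
  set G : ℤ[X] := (X ^ 2 - X + 1) ^ (4 * p ^ 3) ^ (m * r)
  have hG : G.Monic := monic_X_sq_sub_X_add_one.pow _
  refine hasGenericBound_of_bohrSet hG (N := 1) (M := p) (K := p) hp.ne_zero hp.ne_zero
    (pow_one p ▸ hcap _ 1) ?_ (fun q hq _ hcoeff hqI ↦ hq ?_) ?_
  · rw [natDegree_X_sq_sub_X_add_one_pow]
    exact (Nat.lt_pow_self hp.one_lt).trans_le (Nat.pow_le_pow_right hp.pos (by lia))
  · have dvd := (C_dvd_iff_dvd_coeff _ _).1 (hI q (by simpa using hqI))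
    exact Polynomial.ext fun i ↦ Int.eq_zero_of_abs_lt_dvd (dvd i) (hcoeff i)
  · intro F _ _ t p' _ _ χ hIt
    have : (p : F) = 0 := by simpa using hIt hpI
    obtain rfl : p' = p :=
      (Nat.prime_dvd_prime_iff_eq Fact.out hp).1 ((CharP.cast_eq_zero_iff F p' p).1 this)
    exact card_le_card_bohrSet_char_mul _

lemma exists_prime_forall_hasPowerCap {G : ℤ[X]} (hG : G.Monic) {N : ℤ} (hN : N ≠ 0)
    (hG0 : G.eval 0 ≠ 0) (hGN : G.eval N ≠ 0) : ∃ ℓ m r, ℓ.Prime ∧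
      ∀ j k, HasPowerCap (C N) X m r (RecurrentSeq (G ^ j) (ℓ ^ k)) := by
  obtain ⟨ℓ, hℓ, hdvd⟩ := exists_prime_not_dvd (mul_ne_zero hN (mul_ne_zero hG0 hGN))
  obtain ⟨m, r, hcap⟩ := RecurrentSeq.exists_forall_hasPowerCap hℓ hG
    (fun h ↦ hdvd (h.mul_right _)) (fun h ↦ hdvd ((h.mul_right _).mul_left _))
    (fun h ↦ hdvd ((h.mul_left _).mul_left _))
  exact ⟨ℓ, m, r, hℓ, hcap⟩

-- For `h` of minimal degree in `I`, the parameter `s = h.leadingCoeff * t` is a root of the monic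
-- polynomial `h.integralNormalization`, so that the Bohr sets defined by `s` are not smaller for
-- large `M`.
lemma hasGenericBound_of_forall_C_notMem {I : Ideal ℤ[X]} [I.IsPrime] (hI : I ≠ ⊥)
    (hC : ∀ a : ℤ, a ≠ 0 → C a ∉ I) (hX : X ∉ I) (hX1 : X - 1 ∉ I) :
    HasGenericBound.{u, v} I := by
  obtain ⟨h, hh⟩ := exists_minimalFor_of_wellFoundedLT (fun q ↦ q ∈ I ∧ q ≠ 0) natDegree
    ((Submodule.ne_bot_iff I).1 hI)
  have hdeg : h.natDegree ≠ 0 := fun h0 ↦ by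
    obtain ⟨a, rfl⟩ := natDegree_eq_zero.1 h0
    exact hC a (by simpa using hh.1.2) hh.1.1
  set N := h.leadingCoeff
  have hN : N ≠ 0 := leadingCoeff_ne_zero.2 hh.1.2
  set G := h.integralNormalization
  have hG : G.Monic := monic_integralNormalization hh.1.2
  have hGdeg : G.natDegree = h.natDegree := natDegree_integralNormalization
  have hG0 : G.eval 0 ≠ 0 := by
    simpa using eval_leadingCoeff_mul_integralNormalization_ne_zero hdeg
      (eval_ne_zero_of_minimalFor hh (a := 0) (by simpa using hX))
  have hGN : G.eval N ≠ 0 := by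
    simpa using eval_leadingCoeff_mul_integralNormalization_ne_zero hdeg
      (eval_ne_zero_of_minimalFor hh (a := 1) (by simpa using hX1))
  obtain ⟨ℓ, m, r, hℓ, hcap⟩ := exists_prime_forall_hasPowerCap hG hN hG0 hGN
  set H := roundingScale G N
  have hH : H ≠ 0 := roundingScale_ne_zero hG N
  set k := (4 * (H ^ G.natDegree) ^ 3) ^ (m * r)
  refine hasGenericBound_of_bohrSet hG (N := N) (M := ℓ ^ k) (K := H ^ G.natDegree)
    (pow_ne_zero _ hℓ.ne_zero) (pow_ne_zero _ hH) (pow_one G ▸ hcap 1 k)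
    ((Nat.lt_pow_self hℓ.one_lt).trans_le (Nat.le_self_pow (hGdeg ▸ hdeg) _))
    (fun q hq hqdeg _ hqI ↦ ?_) ?_
  · have hlt : (q.comp (C N * X)).natDegree < h.natDegree := by
      rwa [natDegree_comp, natDegree_C_mul_X _ hN, mul_one, natDegree_lt_iff_degree_lt hq, ← hGdeg]
    exact hlt.not_ge (hh.2 ⟨hqI, mt (comp_C_mul_X_eq_zero_iff (by simpa using hN)).1 hq⟩ hlt.le)
  · intro F _ _ t p _ _ χ hIt
    refine card_le_card_bohrSet_mul_of_aeval_eq_zero ?_ hH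
    have := integralNormalization_eval₂_leadingCoeff_mul (Nat.one_le_iff_ne_zero.2 hdeg)
      (algebraMap ℤ F) t
    rwa [← aeval_def t h, hIt hh.1.1, mul_zero] at this

lemma exists_isRounding_quotient {R F : Type*} [CommRing R] {I : Ideal R} [I.IsMaximal]
    [Finite (R ⧸ I)] [Field F] [Fintype F] {φ : R →+* F} (hI : I ≤ RingHom.ker φ) (q : R) :
    ∃ f : F → R ⧸ I, IsRounding (φ q) 1 q univ f 1 1 := by
  classical
  let _ := Ideal.Quotient.field I
  have := Fintype.ofFinite (R ⧸ I)
  let _ : Algebra (R ⧸ I) F := (Ideal.Quotient.lift I φ hI).toAlgebra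
  obtain ⟨f, hf⟩ := Module.Projective.exists_dual_eq_one (R ⧸ I) (one_ne_zero (α := F))
  have surjective : Function.Surjective f := fun b ↦ ⟨b • 1, by simp [hf]⟩
  refine ⟨f, fun x _ y _ z _ hxyz ↦ ?_, fun y _ ↦ ?_, by simp⟩
  · have : x - y = Ideal.Quotient.mk I q • (z - y) := hxyz
    rw [one_smul, ← map_sub, this, map_smul, map_sub]
    rfl
  · have := card_fiber_mul_card (f := f.toAddMonoidHom) surjective (f y)
    rw [Nat.card_eq_fintype_card, one_mul]
    exact this.le

lemma hasGenericBound_of_prime_of_not_dvd {I : Ideal ℤ[X]} [I.IsPrime] {p : ℕ} (hp : p.Prime)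
    (hpI : C (p : ℤ) ∈ I) {f : ℤ[X]} (hf : f ∈ I) (hpf : ¬ C (p : ℤ) ∣ f) (hX : X ∉ I)
    (hX1 : X - 1 ∉ I) : HasGenericBound.{u, v} I := by
  obtain ⟨g, hgI, hg⟩ := exists_monic_mem hp hpI hf hpf
  have := finite_quotient_of_C_mem_of_monic_mem (Nat.cast_ne_zero.2 hp.ne_zero) hpI hg hgI
  have : I.IsMaximal := Ideal.Quotient.maximal_of_isField _ (Finite.isField_of_domain _)
  have one_notMem : (1 : ℤ[X]) ∉ I := mt (Ideal.eq_top_iff_one I).2 Ideal.IsPrime.ne_top'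
  obtain ⟨m, r, -, -, hcap⟩ := exists_hasPowerCap_quotient_maximal (p := 1) (q := X) I
    one_notMem hX hX1
  obtain ⟨c, hc, hbound⟩ := hcap.exists_hasCaroWeiBound one_ne_zero one_ne_zero
    (by simpa using Finite.one_lt_card (α := ℤ[X] ⧸ I))
  refine ⟨1, one_notMem, c, hc, fun F _ _ t _ _ hIt _ ↦ ?_⟩
  have := Fintype.ofFinite F
  obtain ⟨L, hL⟩ := exists_isRounding_quotient (φ := (aeval t : ℤ[X] →ₐ[ℤ] F).toRingHom) hIt X
  exact hbound F t univ L (by simpa using hL)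

lemma hasUniformBound_of_root {I : Ideal ℤ[X]} (hI : X ∈ I ∨ X - 1 ∈ I) :
    HasUniformBound.{u, v} I := by
  refine ⟨1, one_pos, fun F _ _ t ht0 ht1 hIt ↦ ?_⟩
  rcases hI with hX | hX1
  · exact (ht0 (by simpa using hIt hX)).elim
  · exact (ht1 (sub_eq_zero.1 (by simpa using hIt hX1))).elim

lemma hasGenericBound_of_isPrime {I : Ideal ℤ[X]} [I.IsPrime] (hX : X ∉ I) (hX1 : X - 1 ∉ I) :
    HasGenericBound.{u, v} I := by
  rcases eq_or_ne I ⊥ with rfl | hI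
  · exact hasGenericBound_bot
  by_cases! hC : ∀ a : ℤ, a ≠ 0 → C a ∉ I
  · exact hasGenericBound_of_forall_C_notMem hI hC hX hX1
  obtain ⟨a, ha, haI⟩ := hC
  obtain ⟨p, hp, hpI⟩ := exists_prime_C_mem ha haI
  by_cases! hdvd : ∀ f ∈ I, C (p : ℤ) ∣ f
  · exact hasGenericBound_of_prime hp hpI hdvd
  · obtain ⟨f, hf, hpf⟩ := hdvd
    exact hasGenericBound_of_prime_of_not_dvd hp hpI hf hpf hX hX1

lemma hasUniformBound (I : Ideal ℤ[X]) : HasUniformBound.{u, v} I := by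
  induction I using IsNoetherian.induction with
  | hgt I ih =>
    by_cases hprime : Ideal.IsPrime I
    · by_cases! hI : X ∈ I ∨ X - 1 ∈ I
      · exact hasUniformBound_of_root hI
      · exact (hasGenericBound_of_isPrime hI.1 hI.2).hasUniformBound ih
    · exact hasUniformBound_of_not_isPrime hprime ih

end UniformBounds

end

lemma add_smul_eq_zero_iff {F V : Type*} [Field F] [AddCommGroup V] [Module F V] {a b c : F}
    (ha : a ≠ 0) (habc : a + b + c = 0) {x y z : V} :
    a • x + b • y + c • z = 0 ↔ x = y + (-c / a) • (z - y) := by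
  have : a • x + b • y + c • z = a • (x - (y + (-c / a) • (z - y))) := by
    obtain rfl : b = -a - c := by linear_combination habc
    rw [smul_sub, smul_add, smul_smul, mul_div_cancel₀ _ ha]
    module
  rw [this, smul_eq_zero, or_iff_right ha, sub_eq_zero]

theorem caro_wei_cap_subset_general :
    ∃ C : ℝ, 0 < C ∧
      ∀ (F : Type u) [Field F] [Finite F] (V : Type v) [AddCommGroup V] [Module F V] (a b c : F),
        a ≠ 0 → b ≠ 0 → c ≠ 0 → a + b + c = 0 →
        ∀ A : Finset V,
          ∃ I ⊆ A,
            (∀ x ∈ I, ∀ y ∈ I, ∀ z ∈ I, a • x + b • y + c • z = 0 → x = y ∧ y = z) ∧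
            C * ∑ x ∈ A,
                (({p : V × V | p.1 ∈ A ∧ p.2 ∈ A ∧ a • x + b • p.1 + c • p.2 = 0}.ncard : ℝ) + 1) ^
                  (-(1 / 3 : ℝ)) ≤ I.card := by
  obtain ⟨C, hC, hbound⟩ := hasUniformBound.{u, v} ⊥
  refine ⟨C, hC, fun F _ _ V _ _ a b c ha hb hc habc A ↦ ?_⟩
  have ht0 : -c / a ≠ 0 := div_ne_zero (neg_ne_zero.2 hc) ha
  have ht1 : -c / a ≠ 1 := fun h ↦ hb (by
    linear_combination habc + (div_eq_one_iff_eq ha).1 h)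
  obtain ⟨I, hIA, hI, hcard⟩ := hbound F (-c / a) ht0 ht1 bot_le V A
  have card_solutionsAt (x : V) : (solutionsAt (-c / a) A x).card
      = {p : V × V | p.1 ∈ A ∧ p.2 ∈ A ∧ a • x + b • p.1 + c • p.2 = 0}.ncard := by
    rw [← Set.ncard_coe_finset]
    congr 1
    ext p
    simp [mem_solutionsAt, add_smul_eq_zero_iff ha habc]
  refine ⟨I, hIA, fun x hx y hy z hz h ↦ ?_, by simpa only [card_solutionsAt] using hcard⟩
  rw [add_smul_eq_zero_iff ha habc, ← sub_eq_iff_eq_add'] at h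
  exact (hI x hx y hy z hz (by rwa [one_smul])).imp_right Eq.symm

/-- **Lemma (Caro–Wei bound for solution-free subsets).**
There is an absolute constant `C > 0` such that for every finite field `F_q`, every
`n`, every admissible tuple `(a, b, c)` (i.e. `a, b, c ≠ 0`, `a + b + c = 0`) and
every finite `A' ⊆ F_q^n`, there is `I ⊆ A'` which is a cap set for `(a, b, c)`
(every `(x, y, z) ∈ I³` with `ax + by + cz = 0` has `x = y = z`) and satisfies
`|I| ≥ C * ∑_{x ∈ A'} (d_x + 1)^{-1/3}`, where `d_x` is the number of pairs
`(y, z) ∈ (A')²` with `ax + by + cz = 0`. -/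
theorem caro_wei_cap_subset :
    ∃ C : ℝ, 0 < C ∧
      ∀ (F : Type) (_ : Field F) (_ : Fintype F) (n : ℕ) (a b c : F),
        a ≠ 0 → b ≠ 0 → c ≠ 0 → a + b + c = 0 →
        ∀ A' : Finset (Fin n → F),
          ∃ I : Finset (Fin n → F), I ⊆ A' ∧
            (∀ x ∈ I, ∀ y ∈ I, ∀ z ∈ I,
              a • x + b • y + c • z = 0 → x = y ∧ y = z) ∧
            C * ∑ x ∈ A',
                ((({p : (Fin n → F) × (Fin n → F) | p.1 ∈ A' ∧ p.2 ∈ A' ∧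
                    a • x + b • p.1 + c • p.2 = 0}).ncard : ℝ) + 1) ^ (-(1/3 : ℝ))
              ≤ (I.card : ℝ) := by
  obtain ⟨C, hC, hbound⟩ := caro_wei_cap_subset_general.{0, 0}
  exact ⟨C, hC, fun F _ _ n ↦ hbound F (Fin n → F)⟩
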